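/- arXiv:1708.05343 — 2 statements merged into one kernel-verified Lean document; each statement's English description precedes it below -/
import Mathlib

section
/- The map sending the function V(m) to the function m ↦ V(m) − m² is a bijection from the class 𝒱∞ onto the class 𝒱. -/
open MeasureTheory Filter

noncomputable section

/-- The Cauchy–Stieltjes kernel density `f(x,m) = V(m)/(V(m)+m(m-x))`. -/
def cskKernel (V : ℝ → ℝ) (m x : ℝ) : ℝ := V m / (V m + m * (m - x))

/-- `ν` is a non-degenerate, compactly supported probability measure on `ℝ` with mean `0`. -/
def IsCSKGenerator (ν : Measure ℝ) : Prop :=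
  IsProbabilityMeasure ν ∧
  (∃ R : ℝ, ν (Set.Icc (-R) R)ᶜ = 0) ∧
  (∀ a : ℝ, ν ≠ Measure.dirac a) ∧
  (∫ x, x ∂ν) = 0

/-- `V` is the variance function of the CSK family generated by `ν`:
`V` is real-analytic near `0`, `V 0 > 0`, and for all `m` near `0` the kernel
`f(x,m)` is a.e. nonnegative, integrates to `1`, and has mean `m`. -/
def IsCSKVarianceFun (ν : Measure ℝ) (V : ℝ → ℝ) : Prop :=
  AnalyticAt ℝ V 0 ∧ 0 < V 0 ∧
  ∃ ε > 0, ∀ m : ℝ, |m| < ε →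
    (∀ᵐ x ∂ν, 0 ≤ cskKernel V m x) ∧
    (∫ x, cskKernel V m x ∂ν) = 1 ∧
    (∫ x, x * cskKernel V m x ∂ν) = m

/-- The class `𝒱` of variance functions of CSK families generated by
non-degenerate compactly supported probability measures with mean `0` and variance `1`. -/
def memV (V : ℝ → ℝ) : Prop :=
  ∃ ν : Measure ℝ, IsCSKGenerator ν ∧ (∫ x, x ^ 2 ∂ν) = 1 ∧ IsCSKVarianceFun ν V

/-- The class `𝒱∞`: those `V` such that `m ↦ V (c * m)` is in `𝒱` for every real `c`. -/
def memVinf (V : ℝ → ℝ) : Prop := ∀ c : ℝ, memV (fun m => V (c * m))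

/-! Expand `V(m) = ∑ bₙ (m / V(m))ⁿ` near `0`. The claim is that `V ∈ 𝒱∞` and `V - m² ∈ 𝒱` are both
equivalent to: `V` is analytic at `0`, `V(0) = 1` and the Hankel matrix of `b` is positive
semidefinite.

If `V - m²` is the variance function generated by `ν`, this Hankel matrix is the Gram matrix in
`L²(ν)` of an explicit sequence of polynomials, hence positive. Conversely, a positive Hankel matrix
yields a Fock space and on it a self-adjoint operator, interpolating between the Boolean (`s = 0`)
and the free (`s = 1`) model, whose distribution in the vacuum state has variance function
`V + s² m² - m²`. Since `V(c m)` has the coefficients `cⁿ bₙ`, positivity survives rescaling, and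
`s = 1` gives `V ∈ 𝒱∞`. Finally, if `V(c m) = (V(c m) + m²) - m²` is in `𝒱` for all `c ≠ 0`, then
the Hankel matrices of `V + c⁻² m²` are positive, and so is their limit as `c → ∞`. -/

open Topology Polynomial

section Analytic

variable {𝕜 : Type*} [NontriviallyNormedField 𝕜]

section

variable {E : Type*} [NormedAddCommGroup E] [NormedSpace 𝕜 E]

theorem analyticAt_dslope {f : 𝕜 → E} {a : 𝕜} (hf : AnalyticAt 𝕜 f a) :
    AnalyticAt 𝕜 (dslope f a) a :=
  let ⟨_, hp⟩ := hf
  hp.has_fpower_series_dslope_fslope.analyticAt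

theorem dslope_comp_mul_left (f : 𝕜 → E) (c x : 𝕜) :
    dslope (fun y => f (c * y)) 0 x = c • dslope f 0 (c * x) := by
  rcases eq_or_ne x 0 with rfl | hx
  · rw [dslope_same, mul_zero, dslope_same, deriv_comp_mul_left, mul_zero]
  rcases eq_or_ne c 0 with rfl | hc
  · simp [dslope_of_ne, hx, slope]
  · rw [dslope_of_ne _ hx, dslope_of_ne _ (mul_ne_zero hc hx), slope_def_module,
      slope_def_module, sub_zero, sub_zero, mul_zero, mul_inv, smul_smul, mul_inv_cancel_left₀ hc]

theorem dslope_const_smul (f : 𝕜 → E) (a c x : 𝕜) :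
    dslope (fun y => c • f y) a x = c • dslope f a x := by
  rcases eq_or_ne x a with rfl | hx
  · rw [dslope_same, dslope_same, deriv_fun_const_smul_field]
  · rw [dslope_of_ne _ hx, dslope_of_ne _ hx, slope_def_module, slope_def_module, ← smul_sub,
      smul_comm]

theorem eventuallyEq_dslope {f g : 𝕜 → E} {a : E} (hf : DifferentiableAt 𝕜 f 0)
    (hg : ContinuousAt g 0) (hfg : ∀ᶠ z in 𝓝 0, f z = a + z • g z) : g =ᶠ[𝓝 0] dslope f 0 := by
  refine (ContinuousAt.eventuallyEq_nhds_iff_eventuallyEq_nhdsNE hg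
    (continuousAt_dslope_same.2 hf)).1 ?_
  have hf0 : f 0 = a := by simpa using hfg.self_of_nhds
  filter_upwards [hfg.filter_mono nhdsWithin_le_nhds, self_mem_nhdsWithin] with z hz hz0
  rw [dslope_of_ne _ hz0, slope_def_module, hz, hf0, add_sub_cancel_left, sub_zero,
    inv_smul_smul₀ hz0]

theorem coeff_eq_of_eq_add_smul {F : ℕ → 𝕜 → E} {s : ℕ → E}
    {p : FormalMultilinearSeries 𝕜 𝕜 E} (hp : HasFPowerSeriesAt (F 0) p 0)
    (hF : ∀ n, ContinuousAt (F n) 0)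
    (hs : ∀ n, ∀ᶠ z in 𝓝 0, F n z = s n + z • F (n + 1) z) (n : ℕ) : p.coeff n = s n := by
  induction n generalizing F s p with
  | zero =>
    have h0 := (hs 0).self_of_nhds
    rw [zero_smul, add_zero] at h0
    rw [← h0, ← hp.coeff_zero 1, FormalMultilinearSeries.coeff]
  | succ n ih =>
    have hF1 := eventuallyEq_dslope hp.analyticAt.differentiableAt (hF 1) (hs 0)
    rw [← p.coeff_fslope]
    exact ih (hp.has_fpower_series_dslope_fslope.congr hF1.symm) (fun n => hF (n + 1))
      fun n => hs (n + 1)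

theorem hasSum_of_eq_add_smul {F : ℕ → 𝕜 → E} {s : ℕ → E} (h0 : AnalyticAt 𝕜 (F 0) 0)
    (hF : ∀ n, ContinuousAt (F n) 0)
    (hs : ∀ n, ∀ᶠ z in 𝓝 0, F n z = s n + z • F (n + 1) z) :
    ∀ᶠ z in 𝓝 0, HasSum (fun n => z ^ n • s n) (F 0 z) := by
  obtain ⟨p, hp⟩ := h0
  filter_upwards [hasFPowerSeriesAt_iff.1 hp] with z hz
  simpa only [coeff_eq_of_eq_add_smul hp hF hs, zero_add] using hz

theorem hasSum_pow_smul_of_eq_add_smul [CompleteSpace 𝕜] [CharZero 𝕜] {F : ℕ → 𝕜 → E} {s : ℕ → E}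
    {g : 𝕜 → 𝕜} (hg : AnalyticAt 𝕜 g 0) (hg0 : g 0 = 0) (hg' : deriv g 0 ≠ 0)
    (h0 : AnalyticAt 𝕜 (F 0) 0) (hF : ∀ n, ContinuousAt (F n) 0)
    (hs : ∀ n, ∀ᶠ z in 𝓝 0, F n z = s n + g z • F (n + 1) z) :
    ∀ᶠ z in 𝓝 0, HasSum (fun n => g z ^ n • s n) (F 0 z) := by
  set ψ := hg.hasStrictDerivAt.localInverse _ _ _ hg'
  have hψ : AnalyticAt 𝕜 ψ 0 := by simpa only [hg0] using hg.analyticAt_localInverse hg'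
  have hgψ : ∀ᶠ w in 𝓝 0, g (ψ w) = w := by
    simpa only [hg0] using hg.hasStrictDerivAt.eventually_right_inverse hg'
  have hψg : ∀ᶠ z in 𝓝 0, ψ (g z) = z := hg.hasStrictDerivAt.eventually_left_inverse hg'
  have hψ0 : ψ 0 = 0 := by simpa only [hg0] using hψg.self_of_nhds
  have hψt : Tendsto ψ (𝓝 0) (𝓝 0) := by simpa only [hψ0] using hψ.continuousAt.tendsto
  have hgt : Tendsto g (𝓝 0) (𝓝 0) := by simpa only [hg0] using hg.continuousAt.tendsto
  have hsum : ∀ᶠ w in 𝓝 0, HasSum (fun n => w ^ n • s n) (F 0 (ψ w)) := by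
    refine hasSum_of_eq_add_smul (F := fun n w => F n (ψ w)) ?_ (fun n => ?_) fun n => ?_
    · exact AnalyticAt.comp_of_eq h0 hψ hψ0
    · exact ContinuousAt.comp_of_eq (hF n) hψ.continuousAt hψ0
    · filter_upwards [hψt.eventually (hs n), hgψ] with w hw hw'
      rw [hw, hw']
  filter_upwards [hgt.eventually hsum, hψg] with z hz hz'
  rwa [hz'] at hz

end

section

variable {A : Type*} [NormedRing A] [NormedAlgebra 𝕜 A]

/-- The functions `tₙ` with `t₀ = V` and `tₙ₊₁ = (V / m) (tₙ - tₙ(0))`, i.e. the tails of the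
expansion of `V` in powers of `m / V`; the divided difference `dslope` makes sense of `m = 0`. -/
def cumulantTail (V : 𝕜 → A) : ℕ → 𝕜 → A
  | 0 => V
  | n + 1 => fun m => V m * dslope (cumulantTail V n) 0 m

/-- The coefficients `bₙ` of the expansion `V(m) = ∑ bₙ (m / V(m))ⁿ`. They are the free cumulants
`κₙ₊₂` of the measure with variance function `V`, and the Boolean cumulants with the same shift of
the measure with variance function `V - m²`. -/
def cumulant (V : 𝕜 → A) (n : ℕ) : A := cumulantTail V n 0

theorem analyticAt_cumulantTail {V : 𝕜 → A} (hV : AnalyticAt 𝕜 V 0) (n : ℕ) :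
    AnalyticAt 𝕜 (cumulantTail V n) 0 := by
  induction n with
  | zero => exact hV
  | succ n ih => exact hV.mul (analyticAt_dslope ih)

theorem mul_cumulantTail_sub (V : 𝕜 → A) (n : ℕ) (m : 𝕜) :
    V m * (cumulantTail V n m - cumulant V n) = m • cumulantTail V (n + 1) m := by
  rw [cumulant, ← sub_smul_dslope, sub_zero, mul_smul_comm, cumulantTail]

theorem cumulantTail_comp_mul_left (V : 𝕜 → A) (c : 𝕜) (n : ℕ) :
    cumulantTail (fun m => V (c * m)) n = fun m => c ^ n • cumulantTail V n (c * m) := by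
  induction n with
  | zero => simp [cumulantTail]
  | succ n ih =>
    funext m
    rw [cumulantTail, ih]
    simp only [cumulantTail]
    rw [dslope_const_smul (fun y => cumulantTail V n (c * y)), dslope_comp_mul_left, smul_smul,
      mul_smul_comm, ← pow_succ]

theorem cumulant_comp_mul_left (V : 𝕜 → A) (c : 𝕜) (n : ℕ) :
    cumulant (fun m => V (c * m)) n = c ^ n • cumulant V n := by
  simp only [cumulant, cumulantTail_comp_mul_left, mul_zero]

theorem cumulantTail_comp {B : Type*} [NormedRing B] [NormedAlgebra 𝕜 B] (φ : A →L[𝕜] B)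
    (hφ : ∀ a b, φ (a * b) = φ a * φ b) {V : 𝕜 → A} (hV : AnalyticAt 𝕜 V 0) (n : ℕ) :
    cumulantTail (φ ∘ V) n = φ ∘ cumulantTail V n := by
  induction n with
  | zero => rfl
  | succ n ih =>
    funext m
    simp only [cumulantTail, ih, Function.comp_apply, hφ]
    rw [φ.dslope_comp _ _ _ fun _ => (analyticAt_cumulantTail hV n).differentiableAt]

theorem continuous_cumulant_add_smul {K : Type*} [TopologicalSpace K] [CompactSpace K]
    (d : C(K, 𝕜)) {V W : 𝕜 → 𝕜} (hV : AnalyticAt 𝕜 V 0) (hW : AnalyticAt 𝕜 W 0) (n : ℕ) :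
    Continuous fun δ => cumulant (fun m => V m + d δ * W m) n := by
  let U : 𝕜 → C(K, 𝕜) := fun m => V m • 1 + W m • d
  have hU : AnalyticAt 𝕜 U 0 := (hV.smul analyticAt_const).add (hW.smul analyticAt_const)
  refine (cumulant U n).continuous.congr fun δ => ?_
  have hm : (fun m => V m + d δ * W m) = ContinuousMap.evalCLM 𝕜 δ ∘ U := by
    funext m
    simp [U, mul_comm]
  rw [hm, cumulant, cumulant, cumulantTail_comp _ (fun _ _ => rfl) hU]
  rfl

end

end Analytic

section Hausdorff

/-- Hausdorff's positivity condition on the linear functional `L`: it is nonnegative on the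
products `X ^ i * (1 - X) ^ j`, so that its moments form a completely monotone sequence. -/
def IsCompletelyMonotone (L : ℝ[X] →ₗ[ℝ] ℝ) : Prop :=
  ∀ i j : ℕ, 0 ≤ L (X ^ i * (1 - X) ^ j)

theorem isCompletelyMonotone_of_sq_nonneg {L : ℝ[X] →ₗ[ℝ] ℝ} (hsq : ∀ q, 0 ≤ L (q * q))
    (hloc : ∀ q, 0 ≤ L (X * (1 - X) * (q * q))) : IsCompletelyMonotone L := by
  have hX (q : ℝ[X]) : 0 ≤ L (X * (q * q)) := by
    rw [show X * (q * q) = X * q * (X * q) + X * (1 - X) * (q * q) by ring, map_add]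
    exact add_nonneg (hsq _) (hloc q)
  have h1X (q : ℝ[X]) : 0 ≤ L ((1 - X) * (q * q)) := by
    rw [show (1 - X) * (q * q) = (1 - X) * q * ((1 - X) * q) + X * (1 - X) * (q * q) by ring,
      map_add]
    exact add_nonneg (hsq _) (hloc q)
  intro i j
  obtain ⟨a, rfl | rfl⟩ := Nat.even_or_odd' i <;> obtain ⟨b, rfl | rfl⟩ := Nat.even_or_odd' j
  · convert hsq (X ^ a * (1 - X) ^ b) using 2; ring
  · convert h1X (X ^ a * (1 - X) ^ b) using 2; ring
  · convert hX (X ^ a * (1 - X) ^ b) using 2; ring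
  · convert hloc (X ^ a * (1 - X) ^ b) using 2; ring

namespace IsCompletelyMonotone

variable {L : ℝ[X] →ₗ[ℝ] ℝ}

theorem comp_mulLeft_X (h : IsCompletelyMonotone L) :
    IsCompletelyMonotone (L ∘ₗ LinearMap.mulLeft ℝ X) := by
  intro i j
  rw [LinearMap.comp_apply, LinearMap.mulLeft_apply, ← mul_assoc, ← pow_succ']
  exact h (i + 1) j

theorem map_bernsteinPolynomial_nonneg (h : IsCompletelyMonotone L) (n k : ℕ) :
    0 ≤ L (bernsteinPolynomial ℝ n k) := by
  rw [bernsteinPolynomial, mul_assoc, ← nsmul_eq_mul, map_nsmul]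
  exact nsmul_nonneg (h _ _) _

end IsCompletelyMonotone

theorem smul_bernsteinPolynomial_succ (n k : ℕ) :
    (((k + 1 : ℕ) : ℝ) / (n + 1 : ℕ)) • bernsteinPolynomial ℝ (n + 1) (k + 1) =
      X * bernsteinPolynomial ℝ n k := by
  have hchoose : (((k + 1 : ℕ) : ℝ) / (n + 1 : ℕ)) * (n + 1).choose (k + 1) = n.choose k := by
    rw [div_mul_eq_mul_div, div_eq_iff (by positivity)]
    exact_mod_cast (mul_comm _ _).trans ((Nat.add_one_mul_choose_eq n k).symm.trans (mul_comm _ _))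
  rw [bernsteinPolynomial, bernsteinPolynomial, smul_eq_C_mul, ← C_eq_natCast, ← C_eq_natCast,
    ← hchoose, C_mul, Nat.add_sub_add_right]
  ring

theorem abs_div_pow_sub_div_pow_le {n k : ℕ} (hk : k ≤ n) (j : ℕ) :
    |(((k + 1 : ℕ) : ℝ) / (n + 1 : ℕ)) ^ j - ((k : ℝ) / n) ^ j| ≤ j / (n + 1 : ℕ) := by
  rcases n.eq_zero_or_pos with rfl | hn
  · obtain rfl := Nat.le_zero.1 hk
    rcases j with _ | j <;> simp
  have hn' : (0 : ℝ) < n := by exact_mod_cast hn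
  have hk' : (k : ℝ) ≤ n := by exact_mod_cast hk
  have hle : (k : ℝ) / n ≤ 1 := (div_le_one hn').2 hk'
  have hle' : ((k + 1 : ℕ) : ℝ) / (n + 1 : ℕ) ≤ 1 :=
    (div_le_one (by positivity)).2 (by exact_mod_cast Nat.succ_le_succ hk)
  have hdiff : |((k + 1 : ℕ) : ℝ) / (n + 1 : ℕ) - k / n| ≤ 1 / (n + 1 : ℕ) := by
    have heq : ((k + 1 : ℕ) : ℝ) / (n + 1 : ℕ) - k / n = (1 - k / n) * (1 / (n + 1 : ℕ)) := by
      push_cast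
      field_simp
      ring
    have hnonneg : 0 ≤ (k : ℝ) / n := by positivity
    rw [heq, abs_of_nonneg (mul_nonneg (sub_nonneg.2 hle) (by positivity))]
    exact mul_le_of_le_one_left (by positivity) (by linarith)
  have hmax : max |((k + 1 : ℕ) : ℝ) / (n + 1 : ℕ)| |(k : ℝ) / n| ^ (j - 1) ≤ 1 := by
    refine pow_le_one₀ (by positivity) (max_le ?_ ?_)
    · rwa [abs_of_nonneg (by positivity)]
    · rwa [abs_of_nonneg (by positivity)]
  refine (abs_pow_sub_pow_le _ _ _).trans ?_
  calc _ ≤ 1 / ((n + 1 : ℕ) : ℝ) * j * 1 := by gcongr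
    _ = _ := by ring

namespace IsCompletelyMonotone

theorem tendsto_sum_sub_mul_bernstein {L : ℝ[X] →ₗ[ℝ] ℝ} (h : IsCompletelyMonotone L) (j : ℕ) :
    Tendsto (fun n : ℕ => ∑ k ∈ Finset.range (n + 1),
      ((((k + 1 : ℕ) : ℝ) / (n + 1 : ℕ)) ^ j - ((k : ℝ) / n) ^ j) * L (bernsteinPolynomial ℝ n k))
      atTop (𝓝 0) := by
  have hlim : Tendsto (fun n : ℕ => (j : ℝ) / (n + 1 : ℕ) * L 1) atTop (𝓝 0) := by
    simpa using ((tendsto_add_atTop_iff_nat 1).2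
      (tendsto_const_div_atTop_nhds_zero_nat (j : ℝ))).mul_const (L 1)
  refine squeeze_zero_norm (fun n => ?_) hlim
  rw [← bernsteinPolynomial.sum ℝ n, map_sum, Finset.mul_sum]
  refine norm_sum_le_of_le _ fun k hk => ?_
  rw [norm_mul, Real.norm_of_nonneg (h.map_bernsteinPolynomial_nonneg n k), Real.norm_eq_abs]
  exact mul_le_mul_of_nonneg_right
    (abs_div_pow_sub_div_pow_le (Nat.lt_succ_iff.1 (Finset.mem_range.1 hk)) j)
    (h.map_bernsteinPolynomial_nonneg n k)

theorem tendsto_sum_bernstein {L : ℝ[X] →ₗ[ℝ] ℝ} (h : IsCompletelyMonotone L) (j : ℕ) :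
    Tendsto (fun n : ℕ => ∑ k ∈ Finset.range (n + 1),
      ((k : ℝ) / n) ^ j * L (bernsteinPolynomial ℝ n k)) atTop (𝓝 (L (X ^ j))) := by
  induction j generalizing L with
  | zero =>
    simp only [pow_zero, one_mul, ← map_sum, bernsteinPolynomial.sum]
    exact tendsto_const_nhds
  | succ j ih =>
    have hshift (n : ℕ) : ∑ k ∈ Finset.range (n + 1 + 1),
        ((k : ℝ) / (n + 1 : ℕ)) ^ (j + 1) * L (bernsteinPolynomial ℝ (n + 1) k) =
        ∑ k ∈ Finset.range (n + 1), (((k + 1 : ℕ) : ℝ) / (n + 1 : ℕ)) ^ j *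
          L (X * bernsteinPolynomial ℝ n k) := by
      rw [Finset.sum_range_succ', Nat.cast_zero, zero_div, zero_pow j.succ_ne_zero, zero_mul,
        add_zero]
      refine Finset.sum_congr rfl fun k _ => ?_
      rw [← smul_bernsteinPolynomial_succ, map_smul, smul_eq_mul, pow_succ, mul_assoc]
    rw [← tendsto_add_atTop_iff_nat 1, pow_succ']
    have hsum := (ih h.comp_mulLeft_X).add (h.comp_mulLeft_X.tendsto_sum_sub_mul_bernstein j)
    rw [add_zero] at hsum
    refine hsum.congr fun n => ?_
    rw [hshift, ← Finset.sum_add_distrib]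
    refine Finset.sum_congr rfl fun k _ => ?_
    rw [LinearMap.comp_apply, LinearMap.mulLeft_apply]
    ring

end IsCompletelyMonotone

/-- The discrete measure giving the mass `L (b n k)` to the point `k / n`, where `b n k` is the
Bernstein polynomial; it approximates the measure that represents `L`. -/
def bernsteinMeasure (L : ℝ[X] →ₗ[ℝ] ℝ) (n : ℕ) : Measure unitInterval :=
  ∑ k : Fin (n + 1),
    ENNReal.ofReal (L (bernsteinPolynomial ℝ n k)) • Measure.dirac (bernstein.z k)

namespace IsCompletelyMonotone

variable {L : ℝ[X] →ₗ[ℝ] ℝ}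

theorem isProbabilityMeasure_bernsteinMeasure (h : IsCompletelyMonotone L) (h1 : L 1 = 1) (n : ℕ) :
    IsProbabilityMeasure (bernsteinMeasure L n) where
  measure_univ := by
    simp only [bernsteinMeasure, Measure.finsetSum_apply, Measure.smul_apply, measure_univ,
      smul_eq_mul, mul_one]
    rw [← ENNReal.ofReal_sum_of_nonneg fun (k : Fin (n + 1)) _ =>
        h.map_bernsteinPolynomial_nonneg n k, ← map_sum,
      ← Finset.sum_range fun k => bernsteinPolynomial ℝ n k, bernsteinPolynomial.sum, h1,
      ENNReal.ofReal_one]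

theorem integral_bernsteinMeasure (h : IsCompletelyMonotone L) (n : ℕ) (f : unitInterval → ℝ) :
    ∫ x, f x ∂bernsteinMeasure L n =
      ∑ k : Fin (n + 1), f (bernstein.z k) * L (bernsteinPolynomial ℝ n k) := by
  rw [bernsteinMeasure, integral_finsetSum_measure fun k _ =>
    (integrable_dirac enorm_lt_top).smul_measure ENNReal.ofReal_ne_top]
  refine Finset.sum_congr rfl fun k _ => ?_
  rw [integral_smul_measure, integral_dirac,
    ENNReal.toReal_ofReal (h.map_bernsteinPolynomial_nonneg n k), smul_eq_mul, mul_comm]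

theorem exists_integral_pow_eq (h : IsCompletelyMonotone L) (h1 : L 1 = 1) :
    ∃ μ : ProbabilityMeasure unitInterval,
      ∀ j : ℕ, ∫ x, (x : ℝ) ^ j ∂(μ : Measure unitInterval) = L (X ^ j) := by
  let u : ℕ → ProbabilityMeasure unitInterval := fun n =>
    ⟨bernsteinMeasure L n, h.isProbabilityMeasure_bernsteinMeasure h1 n⟩
  let U : Ultrafilter ℕ := Ultrafilter.of atTop
  obtain ⟨μ, -, hμ⟩ := isCompact_univ.ultrafilter_le_nhds (U.map u) (by simp)
  refine ⟨μ, fun j => ?_⟩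
  let f : BoundedContinuousFunction unitInterval ℝ :=
    BoundedContinuousFunction.mkOfCompact ⟨fun x => (x : ℝ) ^ j, by fun_prop⟩
  have hf : Tendsto (fun n => ∫ x, f x ∂bernsteinMeasure L n) U (𝓝 (∫ x, f x ∂(μ : Measure _))) :=
    ((ProbabilityMeasure.continuous_integral_boundedContinuousFunction f).tendsto μ).comp hμ
  refine tendsto_nhds_unique hf (((h.tendsto_sum_bernstein j).mono_left
    (Ultrafilter.of_le _)).congr fun n => ?_)
  rw [h.integral_bernsteinMeasure, Finset.sum_range]
  rfl

end IsCompletelyMonotone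

theorem integral_eval_eq_of_integral_pow_eq {α : Type*} [MeasurableSpace α] {μ : Measure α}
    {g : α → ℝ} (hg : ∀ n, Integrable (fun x => g x ^ n) μ) {L : ℝ[X] →ₗ[ℝ] ℝ}
    (hL : ∀ n, ∫ x, g x ^ n ∂μ = L (X ^ n)) (p : ℝ[X]) : ∫ x, p.eval (g x) ∂μ = L p := by
  simp only [eval_eq_sum_range]
  rw [integral_finsetSum _ fun n _ => (hg n).const_mul _]
  conv_rhs => rw [p.as_sum_range_C_mul_X_pow, map_sum]
  refine Finset.sum_congr rfl fun n _ => ?_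
  rw [integral_const_mul, hL, ← smul_eq_C_mul, map_smul, smul_eq_mul]

end Hausdorff

section Hamburger

theorem le_mul_of_sq_le_mul {a : ℕ → ℝ} {K r : ℝ} (hr : 0 < r) (ha : ∀ n, 0 ≤ a n)
    (hconvex : ∀ n, a (n + 1) ^ 2 ≤ a n * a (n + 2)) (hK : ∀ n, a n ≤ K * r ^ n) :
    a 1 ≤ r * a 0 := by
  by_contra! hlt
  have h1 : 0 < a 1 := (mul_nonneg hr.le (ha 0)).trans_lt hlt
  have h0 : 0 < a 0 := (ha 0).lt_of_ne' fun h0 => by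
    have := hconvex 0
    rw [h0, zero_mul, zero_add] at this
    exact this.not_gt (pow_pos h1 2)
  set q : ℝ := a 1 / a 0
  have hq : 0 < q := div_pos h1 h0
  have hstep (n : ℕ) : 0 < a n ∧ q * a n ≤ a (n + 1) := by
    induction n with
    | zero => exact ⟨h0, (div_mul_cancel₀ _ h0.ne').le⟩
    | succ n ih =>
      have hpos : 0 < a (n + 1) := (mul_pos hq ih.1).trans_le ih.2
      refine ⟨hpos, le_of_mul_le_mul_left ?_ ih.1⟩
      calc a n * (q * a (n + 1)) = q * a n * a (n + 1) := by ring
        _ ≤ a (n + 1) * a (n + 1) := mul_le_mul_of_nonneg_right ih.2 hpos.le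
        _ ≤ a n * a (n + 2) := by rw [← sq]; exact hconvex n
  have hgrowth (n : ℕ) : a 0 * (q / r) ^ n ≤ K := by
    rw [div_pow, ← mul_div_assoc, div_le_iff₀ (pow_pos hr n)]
    refine le_trans ?_ (hK n)
    induction n with
    | zero => simp
    | succ n ih =>
      calc a 0 * q ^ (n + 1) = q * (a 0 * q ^ n) := by ring
        _ ≤ q * a n := mul_le_mul_of_nonneg_left ih hq.le
        _ ≤ a (n + 1) := (hstep n).2
  obtain ⟨n, hn⟩ := pow_unbounded_of_one_lt (K / a 0)
    ((one_lt_div hr).2 ((lt_div_iff₀ h0).2 hlt))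
  exact (hgrowth n).not_gt ((div_lt_iff₀' h0).1 hn)

variable {L : ℝ[X] →ₗ[ℝ] ℝ} {K R : ℝ}

theorem sq_map_mul_le (hsq : ∀ q, 0 ≤ L (q * q)) (p q : ℝ[X]) :
    L (p * q) ^ 2 ≤ L (p * p) * L (q * q) := by
  refine LinearMap.BilinForm.apply_sq_le_of_symm ((LinearMap.mul ℝ ℝ[X]).compr₂ L) hsq ⟨?_⟩ p q
  intro p q
  simp [mul_comm]

theorem exists_abs_map_X_pow_mul_le (hK : ∀ n, |L (X ^ n)| ≤ K * R ^ n) (p : ℝ[X]) :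
    ∃ C, ∀ n, |L (X ^ n * p)| ≤ C * R ^ n := by
  induction p using Polynomial.induction_on' with
  | add p q hp hq =>
    obtain ⟨Cp, hp⟩ := hp
    obtain ⟨Cq, hq⟩ := hq
    refine ⟨Cp + Cq, fun n => ?_⟩
    rw [mul_add, map_add, add_mul]
    exact (abs_add_le _ _).trans (add_le_add (hp n) (hq n))
  | monomial k a =>
    refine ⟨|a| * (K * R ^ k), fun n => ?_⟩
    rw [← smul_X_eq_monomial, mul_smul_comm, ← pow_add, map_smul, smul_eq_mul, abs_mul]
    calc |a| * |L (X ^ (n + k))| ≤ |a| * (K * R ^ (n + k)) := by gcongr; exact hK _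
      _ = |a| * (K * R ^ k) * R ^ n := by ring

theorem map_X_sq_mul_le (hsq : ∀ q, 0 ≤ L (q * q)) (hR : 0 < R)
    (hK : ∀ n, |L (X ^ n)| ≤ K * R ^ n) (q : ℝ[X]) :
    L (X ^ 2 * (q * q)) ≤ R ^ 2 * L (q * q) := by
  obtain ⟨C, hC⟩ := exists_abs_map_X_pow_mul_le hK (q * q)
  have hmul (n : ℕ) : X ^ n * q * (X ^ n * q) = X ^ (2 * n) * (q * q) := by ring
  have h := le_mul_of_sq_le_mul (a := fun n => L (X ^ (2 * n) * (q * q))) (pow_pos hR 2)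
    (fun n => by rw [← hmul]; exact hsq _) (fun n => ?_)
    fun n => (le_abs_self _).trans ((hC _).trans_eq (by rw [pow_mul]))
  · simpa only [mul_one, mul_zero, pow_zero, one_mul] using h
  · have hcs := sq_map_mul_le hsq (X ^ n * q) (X ^ (n + 2) * q)
    rwa [hmul, hmul,
      show X ^ n * q * (X ^ (n + 2) * q) = X ^ (2 * (n + 1)) * (q * q) by ring] at hcs

theorem isCompletelyMonotone_comp_aeval (hsq : ∀ q, 0 ≤ L (q * q)) (hR : 0 < R)
    (hK : ∀ n, |L (X ^ n)| ≤ K * R ^ n) :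
    IsCompletelyMonotone (L ∘ₗ (aeval (C (2 * R)⁻¹ * (X + C R))).toLinearMap) := by
  refine isCompletelyMonotone_of_sq_nonneg (fun q => ?_) fun q => ?_
  · simpa using hsq _
  · set A : ℝ[X] := C (2 * R)⁻¹ * (X + C R)
    have hA : A * (1 - A) = C ((2 * R)⁻¹ ^ 2) * (C (R ^ 2) - X ^ 2) := by
      have h1 : (1 : ℝ[X]) = C (2 * R)⁻¹ * (2 * C R) := by
        rw [show (2 : ℝ[X]) = C 2 from rfl, ← C_mul, ← C_mul, inv_mul_cancel₀ (by positivity), C_1]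
      rw [h1, C_pow, C_pow]
      ring
    have hloc := map_X_sq_mul_le hsq hR hK (aeval A q)
    simp only [LinearMap.comp_apply, AlgHom.toLinearMap_apply, map_mul, map_sub, map_one, aeval_X]
    rw [hA, mul_assoc, sub_mul, ← smul_eq_C_mul, ← smul_eq_C_mul, map_smul, map_sub, map_smul,
      smul_eq_mul, smul_eq_mul]
    exact mul_nonneg (by positivity) (sub_nonneg.2 hloc)

theorem exists_measure_integral_eval_eq (hsq : ∀ q, 0 ≤ L (q * q)) (h1 : L 1 = 1) (hR : 0 < R)
    (hK : ∀ n, |L (X ^ n)| ≤ K * R ^ n) :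
    ∃ ν : Measure ℝ, IsProbabilityMeasure ν ∧ ν (Set.Icc (-R) R)ᶜ = 0 ∧
      ∀ p : ℝ[X], ∫ x, p.eval x ∂ν = L p := by
  obtain ⟨μ, hμ⟩ := (isCompletelyMonotone_comp_aeval hsq hR hK).exists_integral_pow_eq (by simpa)
  let g : unitInterval → ℝ := fun x => 2 * R * x - R
  have hg : Continuous g := by fun_prop
  refine ⟨(μ : Measure unitInterval).map g,
    Measure.isProbabilityMeasure_map hg.measurable.aemeasurable, ?_, fun p => ?_⟩
  · rw [Measure.map_apply hg.measurable measurableSet_Icc.compl]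
    convert measure_empty (μ := (μ : Measure unitInterval))
    refine Set.eq_empty_of_forall_notMem fun x hx => hx ⟨?_, ?_⟩
    · exact (neg_le_sub_iff_le_add.2 (le_add_of_nonneg_left (mul_nonneg (by positivity) x.2.1)))
    · nlinarith [x.2.2]
  · have hint (n : ℕ) : Integrable (fun x : unitInterval => (x : ℝ) ^ n) μ :=
      (BoundedContinuousFunction.mkOfCompact ⟨fun x : unitInterval => (x : ℝ) ^ n,
        by fun_prop⟩).integrable _
    have hp := integral_eval_eq_of_integral_pow_eq hint hμ (p.comp (C (2 * R) * X - C R))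
    have hcomp : (C (2 * R) * (C (2 * R)⁻¹ * (X + C R)) - C R : ℝ[X]) = X := by
      rw [← mul_assoc, ← C_mul, mul_inv_cancel₀ (by positivity), C_1]
      ring
    rw [integral_map hg.measurable.aemeasurable p.continuous.aestronglyMeasurable]
    simpa only [eval_comp, eval_sub, eval_mul, eval_C, eval_X, LinearMap.comp_apply,
      AlgHom.toLinearMap_apply, ← comp_eq_aeval, comp_assoc, sub_comp, mul_comp, C_comp, X_comp,
      hcomp, comp_X] using hp

end Hamburger

section PosSemidef

variable {S : Type*}

theorem posSemidef_of_tendsto {R ι : Type*} [Ring R] [PartialOrder R] [StarRing R]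
    [TopologicalSpace R] [IsTopologicalSemiring R] [ContinuousStar R] [OrderClosedTopology R]
    {l : Filter ι} [l.NeBot] {A : ι → Matrix S S R} {M : Matrix S S R}
    (hA : ∀ k, (A k).PosSemidef) (hM : ∀ i j, Tendsto (fun k => A k i j) l (𝓝 (M i j))) :
    M.PosSemidef := by
  refine ⟨Matrix.IsHermitian.ext fun i j => ?_, fun x => ?_⟩
  · refine tendsto_nhds_unique (l := l) ?_ (hM i j)
    exact (hM j i).star.congr fun k => (hA k).isHermitian.apply i j
  · refine ge_of_tendsto' (x := l) ?_ fun k => (hA k).2 x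
    exact tendsto_finsetSum _ fun i _ => tendsto_finsetSum _ fun j _ =>
      ((hM i j).const_mul _).mul_const _

theorem posSemidef_map_mul {A : Type*} [CommRing A] [Algebra ℝ A] {L : A →ₗ[ℝ] ℝ}
    (hL : ∀ q, 0 ≤ L (q * q)) (v : S → A) : (Matrix.of fun i j => L (v i * v j)).PosSemidef := by
  refine ⟨Matrix.IsHermitian.ext fun i j => ?_, fun x => (hL (x.linearCombination ℝ v)).trans_eq ?_⟩
  · simp only [Matrix.of_apply, star_trivial, mul_comm]
  · simp only [Finsupp.linearCombination_apply, Finsupp.sum, Finset.sum_mul_sum, map_sum,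
      smul_mul_smul_comm, map_smul, smul_eq_mul, Matrix.of_apply, star_trivial, mul_right_comm]

theorem posSemidef_of_mul (a : S → ℝ) : (Matrix.of fun i j => a i * a j).PosSemidef :=
  posSemidef_map_mul (L := LinearMap.id) mul_self_nonneg a

/-- The infinite Hankel matrix of a sequence, whose positivity is the solvability condition of the
moment problem. -/
def hankel {R : Type*} (b : ℕ → R) : Matrix ℕ ℕ R := Matrix.of fun i j => b (i + j)

theorem posSemidef_hankel_pow_mul {b : ℕ → ℝ} (hb : (hankel b).PosSemidef) (c : ℝ) :
    (hankel fun n => c ^ n * b n).PosSemidef := by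
  have h : hankel (fun n => c ^ n * b n) =
      (Matrix.of fun i j => c ^ i * c ^ j).hadamard (hankel b) := by
    ext i j
    simp only [hankel, Matrix.of_apply, Matrix.hadamard_apply, pow_add]
  exact h ▸ (posSemidef_of_mul fun i : ℕ => c ^ i).hadamard hb

end PosSemidef

section Fock

/-- The Gram kernel of the words `e_{i₁} ⊗ ⋯ ⊗ e_{iₖ}` in the full Fock space over a space spanned
by vectors `e₀, e₁, …` with `⟪eᵢ, eⱼ⟫ = b (i + j)`. -/
def fockKernel (b : ℕ → ℝ) : List ℕ → List ℕ → ℝ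
  | [], [] => 1
  | i :: u, j :: v => b (i + j) * fockKernel b u v
  | _, _ => 0

theorem posSemidef_fockKernel {b : ℕ → ℝ} (hb : (hankel b).PosSemidef) :
    (Matrix.of (fockKernel b)).PosSemidef := by
  let K (N : ℕ) : Matrix (List ℕ) (List ℕ) ℝ :=
    Matrix.of fun u v => if u.length < N ∧ v.length < N then fockKernel b u v else 0
  have hK (N : ℕ) : (K N).PosSemidef := by
    induction N with
    | zero =>
      have h : K 0 = 0 := by ext u v; simp [K]
      exact h ▸ Matrix.PosSemidef.zero
    | succ N ih =>
      let nil (u : List ℕ) : ℝ := if u = [] then 1 else 0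
      let cons (u : List ℕ) : ℝ := if u = [] then 0 else 1
      have h : K (N + 1) = (Matrix.of fun u v => nil u * nil v) +
          (Matrix.of fun u v => cons u * cons v).hadamard
            (((hankel b).submatrix (fun u => u.headD 0) (fun u => u.headD 0)).hadamard
              ((K N).submatrix List.tail List.tail)) := by
        ext u v
        rcases u with _ | ⟨i, u⟩ <;> rcases v with _ | ⟨j, v⟩ <;>
          simp [K, nil, cons, fockKernel, hankel]
      exact h ▸ (posSemidef_of_mul nil).add
        ((posSemidef_of_mul cons).hadamard ((hb.submatrix _).hadamard (ih.submatrix _)))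
  refine posSemidef_of_tendsto (l := atTop) hK fun u v => tendsto_const_nhds.congr' ?_
  filter_upwards [eventually_gt_atTop u.length, eventually_gt_atTop v.length] with N hu hv
  exact (if_pos ⟨hu, hv⟩).symm

/-- The bilinear form on finitely supported functions whose Gram kernel on the standard basis
is `K`. -/
def kernelForm {S : Type*} (K : S → S → ℝ) : LinearMap.BilinForm ℝ (S →₀ ℝ) :=
  Finsupp.linearCombination ℝ fun u => Finsupp.linearCombination ℝ (K u)

theorem kernelForm_single {S : Type*} (K : S → S → ℝ) (u v : S) :
    kernelForm K (.single u 1) (.single v 1) = K u v := by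
  simp only [kernelForm, Finsupp.linearCombination_single, one_smul]

theorem kernelForm_self_nonneg {S : Type*} {K : S → S → ℝ} (hK : (Matrix.of K).PosSemidef)
    (x : S →₀ ℝ) : 0 ≤ kernelForm K x x := by
  refine (hK.2 x).trans_eq ?_
  simp only [kernelForm, Finsupp.linearCombination_apply, Finsupp.sum, LinearMap.sum_apply,
    LinearMap.smul_apply, smul_eq_mul, Finset.mul_sum, star_trivial, Matrix.of_apply]
  exact Finset.sum_congr rfl fun u _ => Finset.sum_congr rfl fun v _ => by ring

theorem isSelfAdjoint_of_single {S : Type*} {B : LinearMap.BilinForm ℝ (S →₀ ℝ)}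
    {T : Module.End ℝ (S →₀ ℝ)}
    (h : ∀ u v, B (T (.single u 1)) (.single v 1) = B (.single u 1) (T (.single v 1))) :
    LinearMap.IsSelfAdjoint B T := by
  refine LinearMap.isAdjointPair_iff_comp_eq_compl₂.2 ?_
  refine Finsupp.lhom_ext' fun u => LinearMap.ext_ring ?_
  refine Finsupp.lhom_ext' fun v => LinearMap.ext_ring ?_
  exact h u v

theorem isSelfAdjoint_aeval {R M : Type*} [CommRing R] [AddCommGroup M] [Module R M]
    {B : LinearMap.BilinForm R M} {T : Module.End R M} (hT : LinearMap.IsSelfAdjoint B T)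
    (q : R[X]) : LinearMap.IsSelfAdjoint B (aeval T q) := by
  have hpow (n : ℕ) : LinearMap.IsAdjointPair B B ↑(T ^ n) ↑(T ^ n) := by
    induction n with
    | zero => exact LinearMap.isAdjointPair_one
    | succ n ih =>
      have := LinearMap.IsAdjointPair.mul ih hT
      rwa [← pow_succ, ← pow_succ'] at this
  induction q using Polynomial.induction_on' with
  | add p q hp hq =>
    rw [map_add]
    exact LinearMap.IsAdjointPair.add hp hq
  | monomial n a =>
    rw [aeval_monomial, ← Algebra.smul_def]
    exact (hpow n).smul a

/-- The factor picked up when a letter is created in front of a word, or annihilated there. -/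
def fockWeight (s : ℝ) : List ℕ → ℝ
  | [] => 1
  | _ :: _ => s

/-- The value on a word of the operator `fockOperator`. -/
def fockStep (b : ℕ → ℝ) (s : ℝ) : List ℕ → List ℕ →₀ ℝ
  | [] => .single [0] 1
  | i :: u => s • .single (0 :: i :: u) 1 + (fockWeight s u * b i) • .single u 1 +
      .single ((i + 1) :: u) 1

/-- The sum of the creation operator by `e₀`, its adjoint and the gauge operator of the shift
`eᵢ ↦ eᵢ₊₁`, where creation on, and annihilation onto, a non-empty word carry the factor `s`:
this is the free Fock space for `s = 1` and the Boolean one for `s = 0`. -/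
def fockOperator (b : ℕ → ℝ) (s : ℝ) : Module.End ℝ (List ℕ →₀ ℝ) :=
  Finsupp.linearCombination ℝ (fockStep b s)

theorem fockOperator_single (b : ℕ → ℝ) (s : ℝ) (u : List ℕ) :
    fockOperator b s (.single u 1) = fockStep b s u := by
  rw [fockOperator, Finsupp.linearCombination_single, one_smul]

theorem isSelfAdjoint_fockOperator (b : ℕ → ℝ) (s : ℝ) :
    LinearMap.IsSelfAdjoint (kernelForm (fockKernel b)) (fockOperator b s) := by
  refine isSelfAdjoint_of_single fun u v => ?_
  rw [fockOperator_single, fockOperator_single]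
  rcases u with _ | ⟨i, _ | ⟨i', u⟩⟩ <;> rcases v with _ | ⟨j, _ | ⟨j', v⟩⟩ <;>
    simp only [fockStep, fockKernel, fockWeight, map_add, map_smul, LinearMap.add_apply,
      LinearMap.smul_apply, kernelForm_single, smul_eq_mul] <;>
    ring_nf

theorem kernelForm_vacuum (b : ℕ → ℝ) (x : List ℕ →₀ ℝ) :
    kernelForm (fockKernel b) x (.single [] 1) = x [] := by
  suffices (kernelForm (fockKernel b)).flip (.single [] 1) = Finsupp.lapply [] from
    LinearMap.congr_fun this x
  refine Finsupp.lhom_ext' fun u => LinearMap.ext_ring ?_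
  rcases u with _ | ⟨i, u⟩ <;> simp [kernelForm_single, fockKernel]

/-- The vacuum expectation `p ↦ ⟪p(T) Ω, Ω⟫` of the operator `T = fockOperator b s`, where `Ω` is
the empty word. -/
def vacuumState (b : ℕ → ℝ) (s : ℝ) : ℝ[X] →ₗ[ℝ] ℝ :=
  Finsupp.lapply [] ∘ₗ LinearMap.applyₗ (.single [] 1) ∘ₗ (aeval (fockOperator b s)).toLinearMap

theorem vacuumState_apply (b : ℕ → ℝ) (s : ℝ) (p : ℝ[X]) :
    vacuumState b s p = aeval (fockOperator b s) p (.single [] 1) [] := rfl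

theorem vacuumState_mul_self_nonneg {b : ℕ → ℝ} (hb : (hankel b).PosSemidef) (s : ℝ) (q : ℝ[X]) :
    0 ≤ vacuumState b s (q * q) := by
  rw [vacuumState_apply, map_mul, Module.End.mul_apply, ← kernelForm_vacuum b,
    isSelfAdjoint_aeval (isSelfAdjoint_fockOperator b s)]
  exact kernelForm_self_nonneg (posSemidef_fockKernel hb) _

theorem vacuumState_one (b : ℕ → ℝ) (s : ℝ) : vacuumState b s 1 = 1 := by
  simp [vacuumState_apply]

theorem vacuumState_X (b : ℕ → ℝ) (s : ℝ) : vacuumState b s X = 0 := by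
  simp [vacuumState_apply, fockOperator_single, fockStep]

theorem vacuumState_X_sq (b : ℕ → ℝ) (s : ℝ) : vacuumState b s (X ^ 2) = b 0 := by
  simp [vacuumState_apply, fockOperator_single, fockStep, sq, fockWeight]

/-- The functional on words given by `u ↦ ⟪(1 - z T)⁻¹ u, Ω⟫` for `T = fockOperator b s`, as it
factors over the letters of `u`: the empty word has value `c` and the letter `i` contributes `d i`.
The equations relating `z`, `c` and `d` are those of `linearCombination_fockResolvent`. -/
def fockResolvent (s c : ℝ) (d : ℕ → ℝ) : List ℕ → ℝ
  | [] => c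
  | i :: u => fockWeight s u * d i * fockResolvent s c d u

theorem linearCombination_fockResolvent {b d : ℕ → ℝ} {s c z : ℝ} (hc : c = 1 + z * (d 0 * c))
    (hd : ∀ i, d i = z * (s ^ 2 * d 0 * d i + b i + d (i + 1))) (x : List ℕ →₀ ℝ) :
    x.linearCombination ℝ (fockResolvent s c d) =
      x [] + z * (fockOperator b s x).linearCombination ℝ (fockResolvent s c d) := by
  set Φ := Finsupp.linearCombination ℝ (fockResolvent s c d)
  suffices Φ = Finsupp.lapply [] + z • Φ ∘ₗ fockOperator b s from LinearMap.congr_fun this x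
  refine Finsupp.lhom_ext' fun u => LinearMap.ext_ring ?_
  have hΦ (u : List ℕ) : Φ (.single u 1) = fockResolvent s c d u := by
    rw [Finsupp.linearCombination_single, one_smul]
  simp only [LinearMap.comp_apply, LinearMap.add_apply, LinearMap.smul_apply,
    Finsupp.lsingle_apply, Finsupp.lapply_apply, fockOperator_single, hΦ, smul_eq_mul]
  rcases u with _ | ⟨i, u⟩
  · simpa [fockStep, hΦ, fockResolvent, fockWeight] using hc
  · have hw : fockWeight s (i :: u) = s := rfl
    simp only [fockStep, map_add, map_smul, hΦ, fockResolvent, hw, smul_eq_mul, ne_eq,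
      reduceCtorEq, not_false_eq_true, Finsupp.single_eq_of_ne']
    linear_combination fockWeight s u * fockResolvent s c d u * hd i

theorem continuousAt_linearCombination_fockResolvent {s : ℝ} {c : ℝ → ℝ} {d : ℝ → ℕ → ℝ} {a : ℝ}
    (hc : ContinuousAt c a) (hd : ∀ i, ContinuousAt (fun m => d m i) a) (x : List ℕ →₀ ℝ) :
    ContinuousAt (fun m => x.linearCombination ℝ (fockResolvent s (c m) (d m))) a := by
  have hword (u : List ℕ) : ContinuousAt (fun m => fockResolvent s (c m) (d m) u) a := by
    induction u with
    | nil => exact hc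
    | cons i u ih => exact (continuousAt_const.mul (hd i)).mul ih
  exact tendsto_finsetSum _ fun u _ => (hword u).const_smul (x u)

/-- The functional `fockResolvent` solving its defining equations for `z = m / (V + s² m²)` and the
cumulants of `V`. -/
def cumulantResolvent (V : ℝ → ℝ) (s m : ℝ) : List ℕ → ℝ :=
  fockResolvent s ((V m + s ^ 2 * m ^ 2) / (V m + s ^ 2 * m ^ 2 - m ^ 2))
    fun i => m / V m * cumulantTail V i m

theorem linearCombination_cumulantResolvent {V : ℝ → ℝ} {s m : ℝ} (hV : V m ≠ 0)
    (hU : V m + s ^ 2 * m ^ 2 ≠ 0) (hW : V m + s ^ 2 * m ^ 2 - m ^ 2 ≠ 0) (x : List ℕ →₀ ℝ) :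
    x.linearCombination ℝ (cumulantResolvent V s m) =
      x [] + m / (V m + s ^ 2 * m ^ 2) *
        (fockOperator (cumulant V) s x).linearCombination ℝ (cumulantResolvent V s m) := by
  have h0 : m / V m * cumulantTail V 0 m = m := div_mul_cancel₀ m hV
  refine linearCombination_fockResolvent ?_ (fun i => ?_) x
  · rw [h0]
    field_simp
    ring
  · have htail := mul_cumulantTail_sub V i m
    rw [smul_eq_mul] at htail
    rw [h0, div_mul_eq_mul_div _ _ (_ + _), eq_div_iff hU]
    field_simp
    linear_combination m * htail

theorem continuousAt_linearCombination_cumulantResolvent {V : ℝ → ℝ} (hV : AnalyticAt ℝ V 0)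
    (hV0 : V 0 ≠ 0) (s : ℝ) (x : List ℕ →₀ ℝ) :
    ContinuousAt (fun m => x.linearCombination ℝ (cumulantResolvent V s m)) 0 := by
  have hU : ContinuousAt (fun m => V m + s ^ 2 * m ^ 2) 0 := hV.continuousAt.add (by fun_prop)
  exact continuousAt_linearCombination_fockResolvent
    (hU.div (hU.sub (by fun_prop)) (by simpa using hV0))
    (fun i => (continuousAt_id.div hV.continuousAt hV0).mul
      (analyticAt_cumulantTail hV i).continuousAt) x

theorem hasSum_vacuumState {V : ℝ → ℝ} (hV : AnalyticAt ℝ V 0) (hV0 : V 0 ≠ 0) (s : ℝ) :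
    ∀ᶠ m in 𝓝 0, HasSum
      (fun n => (m / (V m + s ^ 2 * m ^ 2)) ^ n * vacuumState (cumulant V) s (X ^ n))
      ((V m + s ^ 2 * m ^ 2) / (V m + s ^ 2 * m ^ 2 - m ^ 2)) := by
  set U : ℝ → ℝ := fun m => V m + s ^ 2 * m ^ 2
  set W : ℝ → ℝ := fun m => V m + s ^ 2 * m ^ 2 - m ^ 2
  let F (n : ℕ) (m : ℝ) : ℝ :=
    (aeval (fockOperator (cumulant V) s) (X ^ n : ℝ[X]) (.single [] 1)).linearCombination ℝ
      (cumulantResolvent V s m)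
  have hU : AnalyticAt ℝ U 0 := by fun_prop
  have hW : AnalyticAt ℝ W 0 := by fun_prop
  have hU0 : U 0 ≠ 0 := by simpa [U] using hV0
  have hW0 : W 0 ≠ 0 := by simpa [W] using hV0
  have hF0 : F 0 = fun m => U m / W m := by
    simp [F, cumulantResolvent, fockResolvent, U, W]
  have hz : AnalyticAt ℝ (fun m => m / U m) 0 := analyticAt_id.div hU hU0
  have hz' : deriv (fun m => m / U m) 0 ≠ 0 := by
    rw [((hasDerivAt_id' 0).fun_div hU.differentiableAt.hasDerivAt hU0).deriv]
    simpa using hU0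
  have hstep (n : ℕ) :
      ∀ᶠ m in 𝓝 0, F n m = vacuumState (cumulant V) s (X ^ n) + (m / U m) • F (n + 1) m := by
    filter_upwards [hV.continuousAt.eventually_ne hV0, hU.continuousAt.eventually_ne hU0,
      hW.continuousAt.eventually_ne hW0] with m hVm hUm hWm
    simp only [F]
    rw [linearCombination_cumulantResolvent hVm hUm hWm, pow_succ' X n, map_mul, aeval_X,
      Module.End.mul_apply, smul_eq_mul]
    rfl
  filter_upwards [hasSum_pow_smul_of_eq_add_smul (F := F) hz (zero_div _) hz'
    (hF0 ▸ hU.div hW hW0) (fun _ => continuousAt_linearCombination_cumulantResolvent hV hV0 s _)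
    hstep] with m hm
  simpa only [hF0, smul_eq_mul] using hm

theorem exists_abs_vacuumState_X_pow_le {V : ℝ → ℝ} (hV : AnalyticAt ℝ V 0) (hV0 : V 0 ≠ 0)
    (s : ℝ) : ∃ K R, 0 < R ∧ ∀ n, |vacuumState (cumulant V) s (X ^ n)| ≤ K * R ^ n := by
  have hU : ContinuousAt (fun m => V m + s ^ 2 * m ^ 2) 0 :=
    hV.continuousAt.add (by fun_prop)
  have hU0 : ∀ᶠ m in 𝓝 0, V m + s ^ 2 * m ^ 2 ≠ 0 := hU.eventually_ne (by simpa using hV0)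
  have hev := ((hasSum_vacuumState hV hV0 s).and hU0).filter_mono (nhdsWithin_le_nhds (s := {0}ᶜ))
  obtain ⟨m, ⟨hsum, hUm⟩, hm⟩ := (hev.and self_mem_nhdsWithin).exists
  set z := m / (V m + s ^ 2 * m ^ 2)
  have hz : 0 < |z| := abs_pos.2 (div_ne_zero hm hUm)
  obtain ⟨K, hK⟩ := hsum.summable.tendsto_atTop_zero.abs.bddAbove_range
  refine ⟨K, |z|⁻¹, inv_pos.2 hz, fun n => ?_⟩
  rw [inv_pow, ← div_eq_mul_inv, le_div_iff₀ (pow_pos hz n), mul_comm, ← abs_pow, ← abs_mul]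
  exact hK (Set.mem_range_self n)

end Fock

section Resolvent

theorem tendsto_id_div_zero {U : ℝ → ℝ} (hU : ContinuousAt U 0) (hU0 : U 0 ≠ 0) :
    Tendsto (fun m => m / U m) (𝓝 0) (𝓝 0) := by
  have h : ContinuousAt (fun m => m / U m) 0 := continuousAt_id.div hU hU0
  simpa only [zero_div] using h.tendsto

/-- The integral `∫ p(x) / (1 - w x) dν(x)`, a generating function for the moments
of `p dν`. -/
def resolventIntegral (ν : Measure ℝ) (p : ℝ[X]) (w : ℝ) : ℝ := ∫ x, p.eval x / (1 - w * x) ∂ν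

theorem eventually_forall_abs_mul_le_half (R : ℝ) :
    ∀ᶠ w in 𝓝 (0 : ℝ), ∀ x ∈ Set.Icc (-R) R, |w * x| ≤ 1 / 2 := by
  have h : ContinuousAt (fun w : ℝ => |w| * R) 0 := by fun_prop
  filter_upwards [h.eventually_lt_const (by simp : |(0 : ℝ)| * R < 1 / 2)] with w hw x hx
  rw [abs_mul]
  exact (mul_le_mul_of_nonneg_left (abs_le.2 hx) (abs_nonneg w)).trans hw.le

theorem eventually_forall_one_half_le_one_sub_mul (R : ℝ) :
    ∀ᶠ w in 𝓝 (0 : ℝ), ∀ x ∈ Set.Icc (-R) R, 1 / 2 ≤ 1 - w * x := by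
  filter_upwards [eventually_forall_abs_mul_le_half R] with w hw x hx
  linarith [(abs_le.1 (hw x hx)).2]

variable {ν : Measure ℝ} {R : ℝ}

theorem integrable_of_continuousOn_Icc [IsFiniteMeasure ν] (hν : ν (Set.Icc (-R) R)ᶜ = 0)
    {f : ℝ → ℝ} (hf : ContinuousOn f (Set.Icc (-R) R)) : Integrable f ν := by
  rw [← Measure.restrict_eq_self_of_ae_mem (mem_ae_iff.2 hν)]
  exact hf.integrableOn_compact isCompact_Icc

theorem eventually_integrable_eval_div [IsFiniteMeasure ν] (hν : ν (Set.Icc (-R) R)ᶜ = 0) :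
    ∀ᶠ w in 𝓝 (0 : ℝ), ∀ p : ℝ[X], Integrable (fun x => p.eval x / (1 - w * x)) ν := by
  filter_upwards [eventually_forall_one_half_le_one_sub_mul R] with w hw p
  exact integrable_of_continuousOn_Icc hν <| p.continuousOn.div (by fun_prop) fun x hx =>
    (one_half_pos.trans_le (hw x hx)).ne'

theorem resolventIntegral_zero (ν : Measure ℝ) (p : ℝ[X]) :
    resolventIntegral ν p 0 = ∫ x, p.eval x ∂ν := by
  simp only [resolventIntegral, zero_mul, sub_zero, div_one]

theorem eventually_resolventIntegral_eq_add [IsFiniteMeasure ν] (hν : ν (Set.Icc (-R) R)ᶜ = 0)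
    (p : ℝ[X]) : ∀ᶠ w in 𝓝 0,
      resolventIntegral ν p w = ∫ x, p.eval x ∂ν + w * resolventIntegral ν (X * p) w := by
  filter_upwards [eventually_forall_one_half_le_one_sub_mul R, eventually_integrable_eval_div hν]
    with w hw hint
  rw [resolventIntegral, resolventIntegral, ← integral_const_mul,
    ← integral_add (integrable_of_continuousOn_Icc hν p.continuousOn) ((hint _).const_mul w)]
  refine integral_congr_ae ?_
  filter_upwards [mem_ae_iff.2 hν] with x hx
  have := (one_half_pos.trans_le (hw x hx)).ne'
  rw [eval_mul, eval_X]
  field_simp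
  ring

theorem continuousAt_resolventIntegral [IsFiniteMeasure ν] (hν : ν (Set.Icc (-R) R)ᶜ = 0)
    (p : ℝ[X]) : ContinuousAt (resolventIntegral ν p) 0 := by
  refine continuousAt_of_dominated (bound := fun x => |p.eval x| / (1 / 2)) ?_ ?_ ?_ ?_
  · filter_upwards [eventually_integrable_eval_div hν] with w hint
    exact (hint p).aestronglyMeasurable
  · filter_upwards [eventually_forall_one_half_le_one_sub_mul R] with w hw
    filter_upwards [mem_ae_iff.2 hν] with x hx
    rw [norm_div, Real.norm_eq_abs]
    exact div_le_div_of_nonneg_left (abs_nonneg _) one_half_pos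
      ((hw x hx).trans (Real.le_norm_self _))
  · exact integrable_of_continuousOn_Icc hν (by fun_prop)
  · exact Eventually.of_forall fun x => ContinuousAt.div (by fun_prop) (by fun_prop) (by simp)

theorem eventually_hasSum_resolventIntegral_one [IsFiniteMeasure ν]
    (hν : ν (Set.Icc (-R) R)ᶜ = 0) :
    ∀ᶠ w in 𝓝 0, HasSum (fun n => w ^ n * ∫ x, x ^ n ∂ν) (resolventIntegral ν 1 w) := by
  filter_upwards [eventually_forall_abs_mul_le_half R] with w hw
  simp only [resolventIntegral, eval_one, ← integral_const_mul, ← mul_pow]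
  refine hasSum_integral_of_dominated_convergence (fun n _ => (1 / 2) ^ n)
    (fun n => by fun_prop) (fun n => ?_)
    (Eventually.of_forall fun _ => summable_geometric_of_lt_one one_half_pos.le one_half_lt_one)
    (integrable_const _) ?_
  · filter_upwards [mem_ae_iff.2 hν] with x hx
    rw [norm_pow, Real.norm_eq_abs]
    exact pow_le_pow_left₀ (abs_nonneg _) (hw x hx) n
  · filter_upwards [mem_ae_iff.2 hν] with x hx
    rw [one_div]
    exact hasSum_geometric_of_abs_lt_one ((hw x hx).trans_lt one_half_lt_one)

theorem eventually_resolventIntegral_X_mul [IsFiniteMeasure ν] (hν : ν (Set.Icc (-R) R)ᶜ = 0)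
    {p : ℝ[X]} {U g : ℝ → ℝ} (hU : ContinuousAt U 0) (hU0 : U 0 ≠ 0) (hg : ContinuousAt g 0)
    (h : ∀ᶠ m in 𝓝 0, resolventIntegral ν p (m / U m) = ∫ x, p.eval x ∂ν + m / U m * g m) :
    ∀ᶠ m in 𝓝 0, resolventIntegral ν (X * p) (m / U m) = g m := by
  have hz := tendsto_id_div_zero hU hU0
  have hcont : ContinuousAt (fun m => resolventIntegral ν (X * p) (m / U m)) 0 :=
    ContinuousAt.comp_of_eq (g := resolventIntegral ν (X * p))
      (continuousAt_resolventIntegral hν _) (continuousAt_id.div hU hU0) (zero_div _)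
  refine (ContinuousAt.eventuallyEq_nhds_iff_eventuallyEq_nhdsNE hcont hg).1 ?_
  filter_upwards [self_mem_nhdsWithin, (hU.eventually_ne hU0).filter_mono nhdsWithin_le_nhds,
    h.filter_mono nhdsWithin_le_nhds,
    (hz.eventually (eventually_resolventIntegral_eq_add hν p)).filter_mono nhdsWithin_le_nhds]
    with m hm hUm h1 h2
  exact mul_left_cancel₀ (div_ne_zero hm hUm) (add_left_cancel (h2.symm.trans h1))

end Resolvent

section CSK

theorem cskKernel_sub_sq {U : ℝ → ℝ} {m : ℝ} (hU : U m ≠ 0) (x : ℝ) :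
    cskKernel (fun m => U m - m ^ 2) m x = (U m - m ^ 2) / U m * (1 / (1 - m / U m * x)) := by
  have h : 1 - m / U m * x = (U m - m * x) / U m := by field_simp
  rw [cskKernel, h, one_div_div, div_mul_div_cancel₀ hU]
  congr 1
  ring

theorem integral_mul_cskKernel_sub_sq (ν : Measure ℝ) {U : ℝ → ℝ} {m : ℝ} (hU : U m ≠ 0)
    (p : ℝ[X]) : ∫ x, p.eval x * cskKernel (fun m => U m - m ^ 2) m x ∂ν =
      (U m - m ^ 2) / U m * resolventIntegral ν p (m / U m) := by
  rw [resolventIntegral, ← integral_const_mul]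
  congr with x
  rw [cskKernel_sub_sq hU]
  ring

variable {ν : Measure ℝ} {R : ℝ} {U : ℝ → ℝ}

theorem eventually_sub_sq_pos (hU : ContinuousAt U 0) (hU0 : 0 < U 0) :
    ∀ᶠ m in 𝓝 0, 0 < U m - m ^ 2 := by
  have hW : ContinuousAt (fun m => U m - m ^ 2) 0 := hU.sub (by fun_prop)
  exact hW.eventually_const_lt (by simpa using hU0)

theorem eventually_resolventIntegral_X [IsProbabilityMeasure ν] (hν : ν (Set.Icc (-R) R)ᶜ = 0)
    (hU : ContinuousAt U 0) (hU0 : 0 < U 0)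
    (h : ∀ᶠ m in 𝓝 0, resolventIntegral ν 1 (m / U m) = U m / (U m - m ^ 2)) :
    ∀ᶠ m in 𝓝 0, resolventIntegral ν X (m / U m) = m * U m / (U m - m ^ 2) := by
  have hg : ContinuousAt (fun m => m * U m / (U m - m ^ 2)) 0 :=
    (continuousAt_id.mul hU).div (hU.sub (by fun_prop)) (by simpa using hU0.ne')
  rw [← mul_one X]
  refine eventually_resolventIntegral_X_mul hν hU hU0.ne' hg ?_
  filter_upwards [h, eventually_sub_sq_pos hU hU0, hU.eventually_const_lt hU0] with m hm hWm hUm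
  simp only [hm, eval_one, integral_const, probReal_univ, one_smul]
  field_simp
  ring

theorem isCSKVarianceFun_iff_eventually {V : ℝ → ℝ} :
    IsCSKVarianceFun ν V ↔ AnalyticAt ℝ V 0 ∧ 0 < V 0 ∧ ∀ᶠ m in 𝓝 0,
      (∀ᵐ x ∂ν, 0 ≤ cskKernel V m x) ∧ (∫ x, cskKernel V m x ∂ν) = 1 ∧
        (∫ x, x * cskKernel V m x ∂ν) = m := by
  simp only [IsCSKVarianceFun, Metric.eventually_nhds_iff, Real.dist_0_eq_abs]

theorem isCSKVarianceFun_sub_sq_iff [IsProbabilityMeasure ν] (hν : ν (Set.Icc (-R) R)ᶜ = 0)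
    (hU : AnalyticAt ℝ U 0) (hU0 : 0 < U 0) :
    IsCSKVarianceFun ν (fun m => U m - m ^ 2) ↔
      ∀ᶠ m in 𝓝 0, resolventIntegral ν 1 (m / U m) = U m / (U m - m ^ 2) := by
  have hUpos := hU.continuousAt.eventually_const_lt hU0
  have hWpos := eventually_sub_sq_pos hU.continuousAt hU0
  have hone {m : ℝ} (hUm : 0 < U m) : ∫ x, cskKernel (fun m => U m - m ^ 2) m x ∂ν =
      (U m - m ^ 2) / U m * resolventIntegral ν 1 (m / U m) := by
    simpa only [eval_one, one_mul] using integral_mul_cskKernel_sub_sq ν hUm.ne' 1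
  rw [isCSKVarianceFun_iff_eventually]
  constructor
  · rintro ⟨-, -, h⟩
    filter_upwards [h, hUpos, hWpos] with m ⟨_, hm, _⟩ hUm hWm
    rw [hone hUm] at hm
    rw [eq_div_of_mul_eq (div_pos hWm hUm).ne' ((mul_comm _ _).trans hm), one_div_div]
  · intro h
    refine ⟨by fun_prop, by simpa using hU0, ?_⟩
    filter_upwards [h, hUpos, hWpos, eventually_resolventIntegral_X hν hU.continuousAt hU0 h,
      (tendsto_id_div_zero hU.continuousAt hU0.ne').eventually
        (eventually_forall_one_half_le_one_sub_mul R)] with m h1 hUm hWm hX hR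
    refine ⟨?_, ?_, ?_⟩
    · filter_upwards [mem_ae_iff.2 hν] with x hx
      rw [cskKernel_sub_sq hUm.ne']
      have := one_half_pos.trans_le (hR x hx)
      positivity
    · rw [hone hUm, h1, div_mul_div_cancel₀ hUm.ne', div_self hWm.ne']
    · have hmean := integral_mul_cskKernel_sub_sq ν hUm.ne' X
      simp only [eval_X] at hmean
      rw [hmean, hX]
      field_simp

theorem memV_of_posSemidef_hankel {V : ℝ → ℝ} (hV : AnalyticAt ℝ V 0) (hV0 : V 0 = 1)
    (hpos : (hankel (cumulant V)).PosSemidef) (s : ℝ) :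
    memV fun m => V m + s ^ 2 * m ^ 2 - m ^ 2 := by
  have hV1 : V 0 ≠ 0 := hV0 ▸ one_ne_zero
  obtain ⟨K, R, hR, hK⟩ := exists_abs_vacuumState_X_pow_le hV hV1 s
  obtain ⟨ν, hprob, hν, hL⟩ := exists_measure_integral_eval_eq
    (vacuumState_mul_self_nonneg hpos s) (vacuumState_one _ s) hR hK
  have hpow (n : ℕ) : ∫ x, x ^ n ∂ν = vacuumState (cumulant V) s (X ^ n) := by
    rw [← hL]
    simp only [eval_pow, eval_X]
  have hmean : ∫ x, x ∂ν = 0 := by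
    simpa only [pow_one, vacuumState_X] using hpow 1
  have hvar : ∫ x, x ^ 2 ∂ν = 1 := by
    rw [hpow, vacuumState_X_sq, ← hV0]
    rfl
  have hdirac (a : ℝ) : ν ≠ Measure.dirac a := by
    rintro rfl
    simp_all
  have hU : AnalyticAt ℝ (fun m => V m + s ^ 2 * m ^ 2) 0 := by fun_prop
  have hU0 : 0 < V 0 + s ^ 2 * 0 ^ 2 := by simp [hV0]
  refine ⟨ν, ⟨hprob, ⟨R, hν⟩, hdirac, hmean⟩, hvar, (isCSKVarianceFun_sub_sq_iff hν hU hU0).2 ?_⟩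
  filter_upwards [hasSum_vacuumState hV hV1 s,
    (tendsto_id_div_zero hU.continuousAt hU0.ne').eventually
      (eventually_hasSum_resolventIntegral_one hν)] with m hm hm'
  simp only [hpow] at hm'
  exact hm'.unique hm

end CSK

section MonicSequence

/-- The monic polynomials with `P₀ = X` and `Pₙ₊₁ = X Pₙ - bₙ`. Their Gram matrix for a functional
with Boolean cumulants `bₙ` (shifted by two) is the Hankel matrix of `b`. -/
def booleanPolynomial (b : ℕ → ℝ) : ℕ → ℝ[X]
  | 0 => X
  | n + 1 => X * booleanPolynomial b n - C (b n)

theorem map_booleanPolynomial_mul {b : ℕ → ℝ} {L : ℝ[X] →ₗ[ℝ] ℝ}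
    (h0 : ∀ n, L (booleanPolynomial b n) = 0) (h1 : ∀ n, L (X * booleanPolynomial b n) = b n)
    (i j : ℕ) : L (booleanPolynomial b i * booleanPolynomial b j) = b (i + j) := by
  have hC (c : ℝ) (n : ℕ) : L (C c * booleanPolynomial b n) = 0 := by
    rw [← smul_eq_C_mul, map_smul, h0, smul_zero]
  induction i generalizing j with
  | zero => rw [zero_add, booleanPolynomial, h1]
  | succ i ih =>
    have hswap : booleanPolynomial b (i + 1) * booleanPolynomial b j =
        booleanPolynomial b i * booleanPolynomial b (j + 1) +
          (C (b j) * booleanPolynomial b i - C (b i) * booleanPolynomial b j) := by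
      simp only [booleanPolynomial]
      ring
    rw [hswap, map_add, map_sub, hC, hC, ih, sub_zero, add_zero, ← add_assoc, add_right_comm]

theorem posSemidef_hankel_of_map_booleanPolynomial {b : ℕ → ℝ} {L : ℝ[X] →ₗ[ℝ] ℝ}
    (hL : ∀ q, 0 ≤ L (q * q)) (h0 : ∀ n, L (booleanPolynomial b n) = 0)
    (h1 : ∀ n, L (X * booleanPolynomial b n) = b n) : (hankel b).PosSemidef := by
  convert posSemidef_map_mul hL (booleanPolynomial b) using 1
  ext i j
  exact (map_booleanPolynomial_mul h0 h1 i j).symm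

end MonicSequence

section Necessity

variable {ν : Measure ℝ} {R : ℝ} {V : ℝ → ℝ}

theorem eventually_resolventIntegral_X_mul_booleanPolynomial [IsFiniteMeasure ν]
    (hν : ν (Set.Icc (-R) R)ᶜ = 0) (hV : AnalyticAt ℝ V 0) (hV0 : 0 < V 0) {n : ℕ}
    (h : ∀ᶠ m in 𝓝 0, resolventIntegral ν (booleanPolynomial (cumulant V) n) (m / V m) =
      m * cumulantTail V n m / (V m - m ^ 2)) :
    ∫ x, (booleanPolynomial (cumulant V) n).eval x ∂ν = 0 ∧
      ∀ᶠ m in 𝓝 0, resolventIntegral ν (X * booleanPolynomial (cumulant V) n) (m / V m) =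
        V m * cumulantTail V n m / (V m - m ^ 2) := by
  have hint : ∫ x, (booleanPolynomial (cumulant V) n).eval x ∂ν = 0 := by
    simpa only [zero_div, zero_mul, resolventIntegral_zero] using h.self_of_nhds
  have hcont : ContinuousAt (fun m => V m * cumulantTail V n m / (V m - m ^ 2)) 0 :=
    (hV.continuousAt.mul (analyticAt_cumulantTail hV n).continuousAt).div
      (hV.continuousAt.sub (by fun_prop)) (by simpa using hV0.ne')
  refine ⟨hint, eventually_resolventIntegral_X_mul hν hV.continuousAt hV0.ne' hcont ?_⟩
  filter_upwards [h, hV.continuousAt.eventually_const_lt hV0] with m hm hVm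
  rw [hm, hint, zero_add]
  field_simp

theorem eventually_resolventIntegral_booleanPolynomial [IsProbabilityMeasure ν]
    (hν : ν (Set.Icc (-R) R)ᶜ = 0) (hV : AnalyticAt ℝ V 0) (hV0 : 0 < V 0)
    (h : ∀ᶠ m in 𝓝 0, resolventIntegral ν 1 (m / V m) = V m / (V m - m ^ 2)) (n : ℕ) :
    ∀ᶠ m in 𝓝 0, resolventIntegral ν (booleanPolynomial (cumulant V) n) (m / V m) =
      m * cumulantTail V n m / (V m - m ^ 2) := by
  induction n with
  | zero => exact eventually_resolventIntegral_X hν hV.continuousAt hV0 h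
  | succ n ih =>
    filter_upwards [h, (eventually_resolventIntegral_X_mul_booleanPolynomial hν hV hV0 ih).2,
      (tendsto_id_div_zero hV.continuousAt hV0.ne').eventually
        (eventually_integrable_eval_div hν)] with m h1 hX hint
    have hsub : resolventIntegral ν (booleanPolynomial (cumulant V) (n + 1)) (m / V m) =
        resolventIntegral ν (X * booleanPolynomial (cumulant V) n) (m / V m) -
          cumulant V n * resolventIntegral ν 1 (m / V m) := by
      simp only [resolventIntegral]
      rw [← integral_const_mul, ← integral_sub (hint _) ((hint _).const_mul _)]
      simp only [booleanPolynomial, eval_sub, eval_C, eval_one, sub_div, mul_one_div]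
    rw [hsub, hX, h1, ← mul_div_assoc, ← sub_div, mul_comm (cumulant V n), ← mul_sub,
      mul_cumulantTail_sub, smul_eq_mul]

/-- Integration of polynomials against a finite measure with bounded support. -/
def momentFunctional [IsFiniteMeasure ν] (hν : ν (Set.Icc (-R) R)ᶜ = 0) : ℝ[X] →ₗ[ℝ] ℝ where
  toFun p := ∫ x, p.eval x ∂ν
  map_add' p q := by
    simp only [eval_add]
    exact integral_add (integrable_of_continuousOn_Icc hν p.continuousOn)
      (integrable_of_continuousOn_Icc hν q.continuousOn)
  map_smul' c p := by
    simp only [eval_smul, integral_smul, RingHom.id_apply]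

theorem posSemidef_hankel_cumulant_of_memV_sub_sq (hV : AnalyticAt ℝ V 0)
    (h : memV fun m => V m - m ^ 2) : V 0 = 1 ∧ (hankel (cumulant V)).PosSemidef := by
  obtain ⟨ν, ⟨_, ⟨R, hν⟩, -, -⟩, hvar, hW⟩ := h
  have hV0 : 0 < V 0 := by simpa using hW.2.1
  have hone := (isCSKVarianceFun_sub_sq_iff hν hV hV0).1 hW
  have hP (n : ℕ) := eventually_resolventIntegral_X_mul_booleanPolynomial hν hV hV0
    (eventually_resolventIntegral_booleanPolynomial hν hV hV0 hone n)
  have hXP (n : ℕ) : momentFunctional hν (X * booleanPolynomial (cumulant V) n) = cumulant V n := by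
    have h0 := (hP n).2.self_of_nhds
    rw [zero_div, resolventIntegral_zero, zero_pow two_ne_zero, sub_zero,
      mul_div_cancel_left₀ _ hV0.ne'] at h0
    exact h0
  refine ⟨?_, posSemidef_hankel_of_map_booleanPolynomial
    (fun q => integral_nonneg fun x => ?_) (fun n => (hP n).1) hXP⟩
  · calc V 0 = momentFunctional hν (X * X) := (hXP 0).symm
      _ = ∫ x, x ^ 2 ∂ν := by simp [momentFunctional, sq]
      _ = 1 := hvar
  · rw [eval_mul]
    exact mul_self_nonneg _

end Necessity

section Characterization

variable {V : ℝ → ℝ}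

theorem memV_sub_sq_iff : memV (fun m => V m - m ^ 2) ↔
    AnalyticAt ℝ V 0 ∧ V 0 = 1 ∧ (hankel (cumulant V)).PosSemidef := by
  constructor
  · intro h
    obtain ⟨ν, -, -, hW, -⟩ := id h
    have hV : AnalyticAt ℝ V 0 := by
      simpa only [id, sub_add_cancel] using hW.fun_add (analyticAt_id.fun_pow 2)
    exact ⟨hV, posSemidef_hankel_cumulant_of_memV_sub_sq hV h⟩
  · rintro ⟨hV, hV0, hpos⟩
    simpa only [zero_pow two_ne_zero, zero_mul, add_zero] using
      memV_of_posSemidef_hankel hV hV0 hpos 0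

theorem posSemidef_hankel_cumulant_comp_mul_left (h : (hankel (cumulant V)).PosSemidef) (c : ℝ) :
    (hankel (cumulant fun m => V (c * m))).PosSemidef := by
  convert posSemidef_hankel_pow_mul h c using 2
  exact funext (cumulant_comp_mul_left V c)

theorem posSemidef_hankel_cumulant_add_sq_of_memV {δ : ℝ} (hδ : δ ≠ 0)
    (h : memV fun m => V (δ⁻¹ * m)) :
    (hankel (cumulant fun m => V m + δ ^ 2 * m ^ 2)).PosSemidef := by
  have hsub : memV fun m => V (δ⁻¹ * m) + m ^ 2 - m ^ 2 := by simpa only [add_sub_cancel_right]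
  have hpos := posSemidef_hankel_cumulant_comp_mul_left
    (memV_sub_sq_iff (V := fun m => V (δ⁻¹ * m) + m ^ 2).1 hsub).2.2 δ
  simpa only [inv_mul_cancel_left₀ hδ, mul_pow] using hpos

theorem posSemidef_hankel_cumulant_of_memVinf (hV : AnalyticAt ℝ V 0) (h : memVinf V) :
    (hankel (cumulant V)).PosSemidef := by
  let d : C(unitInterval, ℝ) := ⟨fun δ => (δ : ℝ) ^ 2, by fun_prop⟩
  have hcont (n : ℕ) : Continuous fun δ : unitInterval =>
      cumulant (fun m => V m + (δ : ℝ) ^ 2 * m ^ 2) n :=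
    continuous_cumulant_add_smul d hV (by fun_prop) n
  let δ (k : ℕ) : unitInterval := ⟨1 / (k + 1), unitInterval.div_mem zero_le_one (by positivity)
    (by simp)⟩
  have hδ : Tendsto δ atTop (𝓝 0) :=
    tendsto_subtype_rng.2 tendsto_one_div_add_atTop_nhds_zero_nat
  refine posSemidef_of_tendsto (l := atTop) (fun k => posSemidef_hankel_cumulant_add_sq_of_memV
    (δ := δ k) (by positivity) (h _)) fun i j => ?_
  have hlim := ((hcont (i + j)).tendsto 0).comp hδ
  simp only [Set.Icc.coe_zero, zero_pow two_ne_zero, zero_mul, add_zero] at hlim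
  exact hlim

theorem memVinf_iff : memVinf V ↔
    AnalyticAt ℝ V 0 ∧ V 0 = 1 ∧ (hankel (cumulant V)).PosSemidef := by
  constructor
  · intro h
    have h1 : memV fun m => V m + m ^ 2 - m ^ 2 := by
      simpa only [add_sub_cancel_right, one_mul] using h 1
    obtain ⟨hV, hV0, -⟩ := (memV_sub_sq_iff (V := fun m => V m + m ^ 2)).1 h1
    have hV' : AnalyticAt ℝ V 0 := by
      simpa only [id, add_sub_cancel_right] using hV.fun_sub (analyticAt_id.fun_pow 2)
    exact ⟨hV', by simpa using hV0, posSemidef_hankel_cumulant_of_memVinf hV' h⟩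
  · rintro ⟨hV, hV0, hpos⟩ c
    have hVc : AnalyticAt ℝ (fun m => V (c * m)) 0 :=
      AnalyticAt.comp_of_eq (g := V) hV (by fun_prop) (mul_zero c)
    simpa only [one_pow, one_mul, add_sub_cancel_right] using
      memV_of_posSemidef_hankel hVc (by simpa using hV0)
        (posSemidef_hankel_cumulant_comp_mul_left hpos c) 1

end Characterization

/-- The map `V ↦ (m ↦ V(m) − m²)` is a bijection of `𝒱∞` onto `𝒱`. -/
theorem bijOn_sub_sq :
    Set.BijOn (fun V : ℝ → ℝ => fun m => V m - m ^ 2)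
      {V | memVinf V} {V | memV V} := by
  have hiff (V : ℝ → ℝ) : memV (fun m => V m - m ^ 2) ↔ memVinf V :=
    memV_sub_sq_iff.trans memVinf_iff.symm
  have hinv (W : ℝ → ℝ) : (fun m => W m + m ^ 2 - m ^ 2) = W :=
    funext fun m => add_sub_cancel_right (W m) (m ^ 2)
  refine ⟨fun V hV => (hiff V).2 hV, fun V _ V' _ h => ?_, fun W hW => ?_⟩
  · exact funext fun m => sub_left_injective (congrFun h m)
  · refine ⟨_, (hiff fun m => W m + m ^ 2).1 ?_, hinv W⟩
    rwa [hinv]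
end
end

section
/- Let d ≥ 1 and let β₁,…,β_d > 0 and p₁,…,p_d > 0 be real numbers such that max{p_j, 1/β_j} ≥ 1 for each j = 1,…,d. Then the function V(m) = (1 + m)·∏_{j=1}^{d} (1 + β_j·m)^{p_j} (defined for m in a neighborhood of 0 where all factors are positive, with real powers) belongs to the class 𝒱∞. -/
open MeasureTheory Filter

noncomputable section

open scoped Topology ComplexConjugate

/-!
A function `V` with `V 0 = 1` lies in `𝒱∞` as soon as `m ↦ m / V m` has a local inverse at `0` that
extends to a Pick function `R` (the `R`-transform), holomorphic off two real rays: every rescaling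
of `R` is again such a function, and the generator `ν` is found by solving
`k = (1 - w R(w k))⁻¹` by iteration, the iterates being generating functions of probability
measures by Robertson's representation. For such `ν` the kernels have total mass `1`, which forces
all the other conditions.

For `V m = ∏ (1 + β k * m) ^ p k` put `F m = log m - ∑ p k * log (1 + β k * m)`. In the variable
`u = log m` its derivative has negative imaginary part on the strip `0 < Im u < π`, which is convex,
so `F` is injective on the upper half-plane. If the exponent of a largest `β k` is at least `1`,
the cluster values of `F` at the real axis and at infinity avoid the strip `0 < Im < π`: to the left
of `-1 / β k` and at infinity because `Im F m ≤ arg (m / (1 + β k * m))`, and to the right of it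
because there `Im F` tends to `0` or `π`. Hence `F` covers the strip, and `F⁻¹ ∘ log` is the
required extension. The factor `1 + m` guarantees that a largest `β k` either is `1`, with
exponent `1`, or exceeds `1`.
-/

section KernelFamily

variable {ν : Measure ℝ} {V : ℝ → ℝ} {L : ℝ}

lemma eventually_half_le_cskKernel_denom (hV : ContinuousAt V 0) (hV0 : 0 < V 0) (L : ℝ) :
    ∀ᶠ m in 𝓝 0, 0 < V m ∧ ∀ x ∈ Set.Icc (-L) L, V m / 2 ≤ V m + m * (m - x) := by
  have hsmall : ∀ᶠ m in 𝓝 (0 : ℝ), |m| * (|m| + |L|) < V m / 2 := by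
    refine ContinuousAt.eventually_lt (by fun_prop) (by fun_prop) ?_
    simpa using hV0
  filter_upwards [hsmall, hV.eventually (lt_mem_nhds hV0)] with m hm hVm
  refine ⟨hVm, fun x hx => ?_⟩
  have hbound : |m * (m - x)| ≤ |m| * (|m| + |L|) := by
    rw [abs_mul]
    gcongr
    exact (abs_sub m x).trans (add_le_add le_rfl ((abs_le.2 hx).trans (le_abs_self L)))
  linarith [neg_abs_le (m * (m - x))]

lemma cskKernel_mem_Icc {m x : ℝ} (hV : 0 < V m) (hx : V m / 2 ≤ V m + m * (m - x)) :
    cskKernel V m x ∈ Set.Icc 0 2 := by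
  have hden : 0 < V m + m * (m - x) := by linarith
  exact ⟨div_nonneg hV.le hden.le, (div_le_iff₀ hden).2 (by linarith)⟩

lemma cskKernel_zero (hV0 : V 0 ≠ 0) (x : ℝ) : cskKernel V 0 x = 1 := by
  simp [cskKernel, hV0]

lemma measurable_cskKernel (V : ℝ → ℝ) (m : ℝ) : Measurable (cskKernel V m) := by
  unfold cskKernel
  fun_prop

lemma integrable_of_continuous_of_ae_mem_Icc [IsFiniteMeasure ν] (hν : ∀ᵐ x ∂ν, x ∈ Set.Icc (-L) L)
    {g : ℝ → ℝ} (hg : Continuous g) : Integrable g ν := by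
  have hg' : IntegrableOn g (Set.Icc (-L) L) ν := hg.continuousOn.integrableOn_Icc
  rwa [IntegrableOn, Measure.restrict_eq_self_of_ae_mem hν] at hg'

lemma integrable_mul_cskKernel [IsFiniteMeasure ν] (hν : ∀ᵐ x ∂ν, x ∈ Set.Icc (-L) L)
    {g : ℝ → ℝ} (hg : Continuous g) {m : ℝ} (hm : 0 < V m)
    (hden : ∀ x ∈ Set.Icc (-L) L, V m / 2 ≤ V m + m * (m - x)) :
    Integrable (fun x => g x * cskKernel V m x) ν := by
  refine (integrable_of_continuous_of_ae_mem_Icc hν hg).mul_bdd (c := 2)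
    (measurable_cskKernel V m).aestronglyMeasurable ?_
  filter_upwards [hν] with x hx
  have h := cskKernel_mem_Icc hm (hden x hx)
  exact (Real.norm_of_nonneg h.1).trans_le h.2

lemma tendsto_integral_mul_cskKernel [IsFiniteMeasure ν] (hν : ∀ᵐ x ∂ν, x ∈ Set.Icc (-L) L)
    (hV : ContinuousAt V 0) (hV0 : 0 < V 0) {g : ℝ → ℝ} (hg : Continuous g) :
    Tendsto (fun m => ∫ x, g x * cskKernel V m x ∂ν) (𝓝 0) (𝓝 (∫ x, g x ∂ν)) := by
  refine tendsto_integral_filter_of_dominated_convergence (fun x => ‖g x‖ * 2) ?_ ?_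
    ((integrable_of_continuous_of_ae_mem_Icc hν hg).norm.mul_const 2) ?_
  · exact .of_forall fun m =>
      (hg.measurable.mul (measurable_cskKernel V m)).aestronglyMeasurable
  · filter_upwards [eventually_half_le_cskKernel_denom hV hV0 L] with m hm
    filter_upwards [hν] with x hx
    have h := cskKernel_mem_Icc hm.1 (hm.2 x hx)
    rw [norm_mul, Real.norm_of_nonneg h.1]
    gcongr
    exact h.2
  · filter_upwards with x
    have hker : Tendsto (fun m => cskKernel V m x) (𝓝 0) (𝓝 (cskKernel V 0 x)) :=
      ContinuousAt.div hV (by fun_prop) (by simpa using hV0.ne')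
    simpa [cskKernel_zero hV0.ne'] using hker.const_mul (g x)

-- Clearing denominators, `m x f(x, m) = (V m + m²) f(x, m) - V m`.
lemma integral_mul_id_mul_cskKernel [IsFiniteMeasure ν] (hν : ∀ᵐ x ∂ν, x ∈ Set.Icc (-L) L)
    {g : ℝ → ℝ} (hg : Continuous g) {m : ℝ} (hm0 : m ≠ 0) (hm : 0 < V m)
    (hden : ∀ x ∈ Set.Icc (-L) L, V m / 2 ≤ V m + m * (m - x)) :
    ∫ x, g x * x * cskKernel V m x ∂ν =
      ((V m + m ^ 2) * ∫ x, g x * cskKernel V m x ∂ν - V m * ∫ x, g x ∂ν) / m := by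
  rw [← integral_const_mul, ← integral_const_mul, ← integral_sub
    ((integrable_mul_cskKernel hν hg hm hden).const_mul _)
    ((integrable_of_continuous_of_ae_mem_Icc hν hg).const_mul _), ← integral_div]
  refine integral_congr_ae ?_
  filter_upwards [hν] with x hx
  have hne : V m + m * (m - x) ≠ 0 := by linarith [hden x hx]
  simp only [cskKernel]
  field_simp
  ring

lemma ne_dirac_of_integral_eq_zero_of_integral_sq_eq_one (h1 : ∫ x, x ∂ν = 0)
    (h2 : ∫ x, x ^ 2 ∂ν = 1) (a : ℝ) : ν ≠ Measure.dirac a := by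
  rintro rfl
  simp_all

lemma integral_id_mul_cskKernel [IsProbabilityMeasure ν] (hν : ∀ᵐ x ∂ν, x ∈ Set.Icc (-L) L)
    {m : ℝ} (hm0 : m ≠ 0) (hm : 0 < V m)
    (hden : ∀ x ∈ Set.Icc (-L) L, V m / 2 ≤ V m + m * (m - x))
    (hmass : ∫ x, cskKernel V m x ∂ν = 1) : ∫ x, x * cskKernel V m x ∂ν = m := by
  have h := integral_mul_id_mul_cskKernel hν (continuous_const (y := (1 : ℝ))) hm0 hm hden
  simp only [one_mul, hmass, integral_const, probReal_univ, smul_eq_mul, mul_one] at h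
  rw [h]
  field_simp
  ring

lemma integral_id_eq_zero_of_integral_cskKernel [IsProbabilityMeasure ν]
    (hν : ∀ᵐ x ∂ν, x ∈ Set.Icc (-L) L) (hV : ContinuousAt V 0) (hV0 : 0 < V 0)
    (hmass : ∀ᶠ m in 𝓝 0, ∫ x, cskKernel V m x ∂ν = 1) : ∫ x, x ∂ν = 0 := by
  have hlim := (tendsto_integral_mul_cskKernel hν hV hV0 continuous_id).mono_left
    (nhdsWithin_le_nhds (s := {0}ᶜ))
  refine tendsto_nhds_unique hlim ((tendsto_id.mono_left nhdsWithin_le_nhds).congr' ?_)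
  filter_upwards [self_mem_nhdsWithin,
    (eventually_half_le_cskKernel_denom hV hV0 L).filter_mono nhdsWithin_le_nhds,
    hmass.filter_mono nhdsWithin_le_nhds] with m hm0 hm hmass
  exact (integral_id_mul_cskKernel hν hm0 hm.1 hm.2 hmass).symm

lemma integral_sq_eq_of_integral_cskKernel [IsProbabilityMeasure ν]
    (hν : ∀ᵐ x ∂ν, x ∈ Set.Icc (-L) L) (hV : ContinuousAt V 0) (hV0 : 0 < V 0)
    (hmass : ∀ᶠ m in 𝓝 0, ∫ x, cskKernel V m x ∂ν = 1) : ∫ x, x ^ 2 ∂ν = V 0 := by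
  have hlim := (tendsto_integral_mul_cskKernel hν hV hV0 (continuous_pow 2)).mono_left
    (nhdsWithin_le_nhds (s := {0}ᶜ))
  have hlim' : Tendsto (fun m => V m + m ^ 2) (𝓝[≠] 0) (𝓝 (V 0)) := by
    simpa using (hV.tendsto.add ((continuous_pow 2).tendsto 0)).mono_left nhdsWithin_le_nhds
  refine tendsto_nhds_unique hlim (hlim'.congr' ?_)
  filter_upwards [self_mem_nhdsWithin,
    (eventually_half_le_cskKernel_denom hV hV0 L).filter_mono nhdsWithin_le_nhds,
    hmass.filter_mono nhdsWithin_le_nhds] with m (hm0 : m ≠ 0) hm hmassm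
  have h := integral_mul_id_mul_cskKernel hν continuous_id hm0 hm.1 hm.2
  simp only [id, ← sq, integral_id_mul_cskKernel hν hm0 hm.1 hm.2 hmassm,
    integral_id_eq_zero_of_integral_cskKernel hν hV hV0 hmass] at h
  rw [h]
  field_simp
  ring

theorem memV_of_integral_cskKernel_eq_one [IsProbabilityMeasure ν]
    (hν : ∀ᵐ x ∂ν, x ∈ Set.Icc (-L) L) (hV : AnalyticAt ℝ V 0) (hV0 : V 0 = 1)
    (hmass : ∀ᶠ m in 𝓝 0, ∫ x, cskKernel V m x ∂ν = 1) : memV V := by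
  have hVc := hV.continuousAt
  have hpos : 0 < V 0 := hV0 ▸ one_pos
  have hmoment1 := integral_id_eq_zero_of_integral_cskKernel hν hVc hpos hmass
  have hmoment2 := (integral_sq_eq_of_integral_cskKernel hν hVc hpos hmass).trans hV0
  obtain ⟨ε, hε, hball⟩ := Metric.eventually_nhds_iff.1
    ((eventually_half_le_cskKernel_denom hVc hpos L).and hmass)
  refine ⟨ν, ⟨inferInstance, ⟨L, hν⟩,
    ne_dirac_of_integral_eq_zero_of_integral_sq_eq_one hmoment1 hmoment2, hmoment1⟩, hmoment2,
    hV, hpos, ε, hε, fun m hm => ?_⟩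
  obtain ⟨⟨hVm, hden⟩, hmassm⟩ := hball (by simpa using hm)
  refine ⟨?_, hmassm, ?_⟩
  · filter_upwards [hν] with x hx using (cskKernel_mem_Icc hVm (hden x hx)).1
  · rcases eq_or_ne m 0 with rfl | hm0
    · simpa [cskKernel_zero hpos.ne'] using hmoment1
    · exact integral_id_mul_cskKernel hν hm0 hVm hden hmassm

end KernelFamily

section CircleRepresentation

lemma isClosed_range_integral_probabilityMeasure {X ι : Type*} [MeasurableSpace X]
    [TopologicalSpace X] [T2Space X] [BorelSpace X] [CompactSpace X] {f : ι → X → ℝ}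
    (hf : ∀ i, Continuous (f i)) :
    IsClosed (Set.range fun (P : ProbabilityMeasure X) i => ∫ x, f i x ∂(P : Measure X)) := by
  refine (isCompact_range (continuous_pi fun i => ?_)).isClosed
  exact ProbabilityMeasure.continuous_integral_boundedContinuousFunction
    (BoundedContinuousFunction.mkOfCompact ⟨f i, hf i⟩)

lemma exists_probabilityMeasure_integral_eq_circleAverage {X : Type*} [MeasurableSpace X]
    {D : ℂ → ℝ} (hD : ContinuousOn D (Metric.sphere 0 1)) (hD0 : ∀ z : ℂ, ‖z‖ = 1 → 0 ≤ D z)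
    (hD1 : Real.circleAverage D 0 1 = 1) {e : ℂ → X} (he : Measurable e) :
    ∃ P : ProbabilityMeasure X, ∀ g : X → ℝ, Measurable g →
      ∫ x, g x ∂(P : Measure X) = Real.circleAverage (fun z => D z * g (e z)) 0 1 := by
  have hDc : Continuous fun θ => D (circleMap 0 1 θ) :=
    hD.comp_continuous (continuous_circleMap 0 1) (circleMap_mem_sphere 0 zero_le_one)
  let dens : ℝ → ℝ := fun θ => (2 * Real.pi)⁻¹ * D (circleMap 0 1 θ)
  have hdensm : Measurable dens := (hDc.const_mul _).measurable
  have hdens : ∀ θ, 0 ≤ dens θ := fun θ => mul_nonneg (by positivity) (hD0 _ (by simp))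
  let μ : Measure ℝ := (volume.restrict (Set.Ioc 0 (2 * Real.pi))).withDensity
    fun θ => ENNReal.ofReal (dens θ)
  have hμ : ∀ g : ℂ → ℝ, ∫ θ, g (circleMap 0 1 θ) ∂μ =
      Real.circleAverage (fun z => D z * g z) 0 1 := by
    intro g
    rw [integral_withDensity_eq_integral_toReal_smul (by fun_prop) (by simp),
      Real.circleAverage_def, intervalIntegral.integral_of_le Real.two_pi_pos.le, ← integral_smul]
    refine integral_congr_ae (.of_forall fun θ => ?_)
    simp only [ENNReal.toReal_ofReal (hdens θ), dens, smul_eq_mul, mul_assoc]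
  have : IsProbabilityMeasure μ := by
    have hmass : μ.real Set.univ = 1 := by simpa [hD1] using hμ fun _ => 1
    refine ⟨?_⟩
    rw [← ENNReal.toReal_eq_one_iff]
    exact hmass
  have he' : Measurable fun θ => e (circleMap 0 1 θ) := he.comp (by fun_prop)
  refine ⟨⟨μ.map fun θ => e (circleMap 0 1 θ), Measure.isProbabilityMeasure_map he'.aemeasurable⟩,
    fun g hg => ?_⟩
  rw [ProbabilityMeasure.coe_mk, integral_map he'.aemeasurable hg.aestronglyMeasurable]
  exact hμ fun z => g (e z)

lemma sq_norm_sub_ofReal_of_norm_eq_one {z : ℂ} (hz : ‖z‖ = 1) (u : ℝ) :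
    ‖z - u‖ ^ 2 = 1 - 2 * u * z.re + u ^ 2 := by
  have h : z.re ^ 2 + z.im ^ 2 = 1 := by
    rw [sq, sq, ← Complex.normSq_apply, ← Complex.sq_norm, hz, one_pow]
  simp only [Complex.sq_norm, Complex.normSq_apply, Complex.sub_re, Complex.sub_im,
    Complex.ofReal_re, Complex.ofReal_im, sub_zero]
  linear_combination h

lemma circleAverage_re_mul_one_div {H : ℂ → ℂ} (hH : DiffContOnCl ℂ H (Metric.ball 0 1)) {u : ℝ}
    (hu : |u| < 1) :
    Real.circleAverage (fun z => (H z).re * (1 / (1 - 2 * u * z.re + u ^ 2))) 0 1 =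
      (H u).re / (1 - u ^ 2) := by
  have hu1 : 1 - u ^ 2 ≠ 0 := by linarith [(sq_lt_one_iff_abs_lt_one u).2 hu]
  have hden : ∀ z ∈ Metric.sphere (0 : ℂ) 1, ‖z - u‖ ^ 2 ≠ 0 := by
    intro z hz h
    obtain rfl : z = u := by simpa [sub_eq_zero] using h
    simp at hz
    linarith
  have hHc : ContinuousOn H (Metric.sphere 0 1) :=
    hH.continuousOn_ball.mono Metric.sphere_subset_closedBall
  have hint : CircleIntegrable (fun z => ((1 / ‖z - u‖ ^ 2 : ℝ)) • H z) 0 1 :=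
    ((continuousOn_const.div (by fun_prop) hden).smul hHc).circleIntegrable zero_le_one
  have hpoisson : Real.circleAverage (fun z => (1 / ‖z - u‖ ^ 2) • H z) 0 1 =
      (1 / (1 - u ^ 2)) • H u := by
    rw [← hH.circleAverage_poissonKernel_smul' (w := (u : ℂ)) (by simpa using hu),
      ← Real.circleAverage_fun_smul]
    refine Real.circleAverage_congr_sphere fun z hz => ?_
    have hz1 : ‖z‖ = 1 := by simpa using hz
    simp only [sub_zero, hz1, Complex.norm_real, Real.norm_eq_abs, sq_abs, smul_smul]
    congr 1
    field_simp
  calc Real.circleAverage (fun z => (H z).re * (1 / (1 - 2 * u * z.re + u ^ 2))) 0 1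
      = Real.circleAverage (Complex.reCLM ∘ fun z => (1 / ‖z - u‖ ^ 2) • H z) 0 1 := by
        refine Real.circleAverage_congr_sphere fun z hz => ?_
        have hz1 : ‖z‖ = 1 := by simpa using hz
        rw [Function.comp_apply, Complex.reCLM_apply, Complex.smul_re,
          sq_norm_sub_ofReal_of_norm_eq_one hz1, smul_eq_mul, mul_comm]
    _ = (H u).re / (1 - u ^ 2) := by
        rw [Complex.reCLM.circleAverage_comp_comm hint, hpoisson, Complex.reCLM_apply,
          Complex.smul_re, smul_eq_mul, one_div_mul_eq_div]

theorem exists_probabilityMeasure_integral_eq_re_of_diffContOnCl {K : ℂ → ℂ}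
    (hK : DiffContOnCl ℂ K (Metric.ball 0 1)) (hK0 : K 0 = 1)
    (hpos : ∀ z : ℂ, ‖z‖ = 1 → 0 ≤ ((1 - z ^ 2) • K z).re) :
    ∃ P : ProbabilityMeasure (Set.Icc (-1 : ℝ) 1), ∀ u : ℝ, |u| < 1 →
      ∫ x, 1 / (1 - 2 * u * x + u ^ 2) ∂(P : Measure (Set.Icc (-1 : ℝ) 1)) = (K u).re := by
  have hH : DiffContOnCl ℂ (fun z => (1 - z ^ 2) • K z) (Metric.ball 0 1) :=
    (Differentiable.diffContOnCl (by fun_prop)).smul hK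
  have hHc := hH.continuousOn_ball.mono Metric.sphere_subset_closedBall
  obtain ⟨P, hP⟩ := exists_probabilityMeasure_integral_eq_circleAverage
    (Complex.continuous_re.comp_continuousOn hHc) hpos
    (by simpa [hK0, Function.comp_def] using circleAverage_re_mul_one_div hH (u := 0) (by simp))
    ((continuous_projIcc (h := neg_le_self zero_le_one)).comp Complex.continuous_re).measurable
  refine ⟨P, fun u hu => ?_⟩
  have hu1 : 1 - u ^ 2 ≠ 0 := by linarith [(sq_lt_one_iff_abs_lt_one u).2 hu]
  have hHu : ((1 - (u : ℂ) ^ 2) • K u).re / (1 - u ^ 2) = (K u).re := by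
    rw [smul_eq_mul, ← Complex.ofReal_pow, ← Complex.ofReal_one, ← Complex.ofReal_sub,
      Complex.re_ofReal_mul, mul_div_cancel_left₀ _ hu1]
  rw [hP _ (by fun_prop), ← hHu, ← circleAverage_re_mul_one_div hH hu]
  refine Real.circleAverage_congr_sphere fun z hz => ?_
  have hz1 : |z.re| ≤ 1 := (Complex.abs_re_le_norm z).trans (by simpa using hz.le)
  simp [Set.projIcc_of_mem _ (abs_le.1 hz1)]

lemma re_one_sub_sq_smul_of_norm_eq_one {z : ℂ} (hz : ‖z‖ = 1) (k : ℂ) :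
    ((1 - z ^ 2) • k).re = 2 * ((z * k).im * z.im) := by
  have h : z.re * z.re + z.im * z.im = 1 := by
    rw [← Complex.normSq_apply, ← Complex.sq_norm, hz, one_pow]
  simp [sq]
  linear_combination (-k.re) * h

lemma one_sub_two_mul_mul_add_sq_pos {u x : ℝ} (hu : |u| < 1) (hx : |x| ≤ 1) :
    0 < 1 - 2 * u * x + u ^ 2 := by
  have hux : u * x ≤ |u| := (le_abs_self _).trans
    ((abs_mul u x).trans_le (mul_le_of_le_one_right (abs_nonneg u) hx))
  nlinarith [sq_abs u, pow_pos (sub_pos.2 hu) 2]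

lemma exists_probabilityMeasure_integral_eq_re_dilation {K : ℂ → ℂ}
    (hK : DifferentiableOn ℂ K (Metric.ball 0 1)) (hK0 : K 0 = 1)
    (hpos : ∀ v : ℂ, ‖v‖ < 1 → 0 ≤ (v * K v).im * v.im) {r : ℝ} (hr0 : 0 < r) (hr1 : r < 1) :
    ∃ P : ProbabilityMeasure (Set.Icc (-1 : ℝ) 1), ∀ u : ℝ, |u| < 1 →
      ∫ x, 1 / (1 - 2 * u * x + u ^ 2) ∂(P : Measure (Set.Icc (-1 : ℝ) 1)) = (K (r * u)).re := by
  have hball : Set.MapsTo (fun z : ℂ => r * z) (Metric.closedBall 0 1) (Metric.ball 0 1) := by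
    intro z hz
    simp only [mem_closedBall_iff_norm, mem_ball_iff_norm, sub_zero] at hz ⊢
    rw [norm_mul, Complex.norm_real, Real.norm_of_nonneg hr0.le]
    nlinarith [norm_nonneg z]
  have hKr : DiffContOnCl ℂ (fun z => K (r * z)) (Metric.ball 0 1) := by
    refine DifferentiableOn.diffContOnCl ?_
    rw [closure_ball _ one_ne_zero]
    exact hK.comp (by fun_prop) hball
  refine exists_probabilityMeasure_integral_eq_re_of_diffContOnCl hKr (by simpa) fun z hz => ?_
  have h := hpos (r * z) (by simpa using hball (by simp [hz]))
  rw [mul_assoc, Complex.im_ofReal_mul, Complex.im_ofReal_mul] at h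
  rw [re_one_sub_sq_smul_of_norm_eq_one hz]
  refine mul_nonneg two_pos.le (nonneg_of_mul_nonneg_right (a := r * r) ?_ (by positivity))
  linarith

/-- Robertson's representation of typically real functions. -/
theorem exists_probabilityMeasure_integral_eq_re_of_typicallyReal {K : ℂ → ℂ}
    (hK : DifferentiableOn ℂ K (Metric.ball 0 1)) (hK0 : K 0 = 1)
    (hpos : ∀ v : ℂ, ‖v‖ < 1 → 0 ≤ (v * K v).im * v.im) :
    ∃ P : ProbabilityMeasure (Set.Icc (-1 : ℝ) 1), ∀ u : ℝ, |u| < 1 →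
      ∫ x, 1 / (1 - 2 * u * x + u ^ 2) ∂(P : Measure (Set.Icc (-1 : ℝ) 1)) = (K u).re := by
  let f : Set.Ioo (-1 : ℝ) 1 → Set.Icc (-1 : ℝ) 1 → ℝ := fun u x => 1 / (1 - 2 * u * x + u ^ 2)
  have hf : ∀ u, Continuous (f u) := fun u => continuous_const.div (by fun_prop) fun x =>
    (one_sub_two_mul_mul_add_sq_pos (abs_lt.2 u.2) (abs_le.2 x.2)).ne'
  have hlim : Tendsto (fun (r : ℝ) (u : Set.Ioo (-1 : ℝ) 1) => (K (r * u)).re) (𝓝[<] 1)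
      (𝓝 fun u => (K u).re) := by
    refine tendsto_pi_nhds.2 fun u => ?_
    have hKu : ContinuousAt K u := (hK.differentiableAt (Metric.isOpen_ball.mem_nhds
      (by simpa using abs_lt.2 u.2))).continuousAt
    have hKu' : ContinuousAt (fun r : ℝ => (K (r * u)).re) 1 :=
      Complex.continuous_re.continuousAt.comp (ContinuousAt.comp (by simpa using hKu)
        (by fun_prop))
    simpa [ContinuousAt] using hKu'.mono_left nhdsWithin_le_nhds
  have hdil : ∀ᶠ r : ℝ in 𝓝[<] 1, (fun u : Set.Ioo (-1 : ℝ) 1 => (K (r * u)).re) ∈ Set.range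
      fun (P : ProbabilityMeasure (Set.Icc (-1 : ℝ) 1)) u =>
        ∫ x, f u x ∂(P : Measure (Set.Icc (-1 : ℝ) 1)) := by
    filter_upwards [Ioo_mem_nhdsLT zero_lt_one] with r hr
    obtain ⟨P, hP⟩ := exists_probabilityMeasure_integral_eq_re_dilation hK hK0 hpos hr.1 hr.2
    exact ⟨P, funext fun u => hP u (abs_lt.2 u.2)⟩
  obtain ⟨P, hP⟩ := (isClosed_range_integral_probabilityMeasure hf).mem_of_tendsto hlim hdil
  exact ⟨P, fun u hu => congrFun hP ⟨u, abs_lt.1 hu⟩⟩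

end CircleRepresentation

section SlitPlane

/-- The plane `ℂ ∖ ((-∞, -δ] ∪ [δ, ∞))` with two real rays removed, the natural domain of a
generating function `w ↦ ∫ (1 - w x)⁻¹ dν x` of a measure `ν` on `[-1/δ, 1/δ]`. -/
def doublySlitPlane (δ : ℝ) : Set ℂ := {w | w.im = 0 → |w.re| < δ}

variable {δ : ℝ}

lemma isOpen_doublySlitPlane (δ : ℝ) : IsOpen (doublySlitPlane δ) := by
  have h : doublySlitPlane δ = {w | w.im ≠ 0} ∪ {w | |w.re| < δ} := by
    ext w
    exact imp_iff_not_or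
  rw [h]
  exact (isOpen_ne_fun Complex.continuous_im continuous_const).union
    (isOpen_lt Complex.continuous_re.abs continuous_const)

/-- The map `v ↦ 2 δ v / (1 + v²)` from the unit disc onto the doubly slit plane. -/
def joukowski (δ : ℝ) (v : ℂ) : ℂ := 2 * δ * v / (1 + v ^ 2)

lemma one_add_sq_ne_zero_of_norm_lt_one {v : ℂ} (hv : ‖v‖ < 1) : 1 + v ^ 2 ≠ 0 := by
  intro h
  have h1 : ‖v‖ ^ 2 = 1 := by rw [← norm_pow, (by linear_combination h : v ^ 2 = -1)]; simp
  nlinarith [norm_nonneg v]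

lemma joukowski_im (δ : ℝ) (v : ℂ) :
    (joukowski δ v).im = 2 * δ * (1 - ‖v‖ ^ 2) / Complex.normSq (1 + v ^ 2) * v.im := by
  rw [joukowski, Complex.div_im, Complex.sq_norm, Complex.normSq_apply v]
  simp [sq]
  ring

lemma joukowski_ofReal (δ u : ℝ) : joukowski δ u = (δ * (2 * u / (1 + u ^ 2)) : ℝ) := by
  simp only [joukowski]
  push_cast
  ring

lemma abs_two_mul_div_one_add_sq_lt_one {u : ℝ} (hu : |u| < 1) : |2 * u / (1 + u ^ 2)| < 1 := by
  have hu' : 0 < (1 - |u|) ^ 2 := pow_pos (sub_pos.2 hu) 2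
  rw [abs_div, abs_of_pos (by positivity : 0 < 1 + u ^ 2), div_lt_one (by positivity), abs_mul,
    abs_two]
  nlinarith [sq_abs u]

lemma exists_two_mul_div_one_add_sq_eq {a : ℝ} (ha : |a| < 1) :
    ∃ u : ℝ, |u| < 1 ∧ 2 * u / (1 + u ^ 2) = a := by
  have ha2 : 0 < 1 - a ^ 2 := by linarith [(sq_lt_one_iff_abs_lt_one a).2 ha]
  have hs0 : 0 < √(1 - a ^ 2) := Real.sqrt_pos.2 ha2
  have hs2 : √(1 - a ^ 2) ^ 2 = 1 - a ^ 2 := Real.sq_sqrt ha2.le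
  refine ⟨a / (1 + √(1 - a ^ 2)), ?_, ?_⟩
  · rw [abs_div, abs_of_pos (by positivity : 0 < 1 + √(1 - a ^ 2)), div_lt_one (by positivity)]
    linarith
  · generalize √(1 - a ^ 2) = s at hs0 hs2
    field_simp
    linear_combination -a * hs2

lemma joukowski_im_factor_pos (hδ : 0 < δ) {v : ℂ} (hv : ‖v‖ < 1) :
    0 < 2 * δ * (1 - ‖v‖ ^ 2) / Complex.normSq (1 + v ^ 2) := by
  have h1 : 0 < 1 - ‖v‖ ^ 2 := by nlinarith [norm_nonneg v]
  have h2 := Complex.normSq_pos.2 (one_add_sq_ne_zero_of_norm_lt_one hv)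
  positivity

lemma joukowski_mem_doublySlitPlane (hδ : 0 < δ) {v : ℂ} (hv : ‖v‖ < 1) :
    joukowski δ v ∈ doublySlitPlane δ := by
  intro him
  rw [joukowski_im] at him
  have hv0 : v.im = 0 := (mul_eq_zero.1 him).resolve_left (joukowski_im_factor_pos hδ hv).ne'
  lift v to ℝ using hv0
  rw [joukowski_ofReal, Complex.ofReal_re, abs_mul, abs_of_pos hδ]
  exact mul_lt_of_lt_one_right hδ (abs_two_mul_div_one_add_sq_lt_one (by simpa using hv))

lemma differentiableOn_joukowski (δ : ℝ) :
    DifferentiableOn ℂ (joukowski δ) (Metric.ball 0 1) := by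
  refine DifferentiableOn.div (by fun_prop) (by fun_prop) fun v hv => ?_
  exact one_add_sq_ne_zero_of_norm_lt_one (by simpa using hv)

variable {k : ℂ → ℂ}

lemma im_mul_joukowski_mul_im_nonneg (hδ : 0 < δ) (hpos : ∀ w, 0 ≤ (w * k w).im * w.im) {v : ℂ}
    (hv : ‖v‖ < 1) : 0 ≤ (v * (k (joukowski δ v) / (1 + v ^ 2))).im * v.im := by
  set c := 2 * δ * (1 - ‖v‖ ^ 2) / Complex.normSq (1 + v ^ 2) with hc
  have hc0 : 0 < c := joukowski_im_factor_pos hδ hv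
  have h := hpos (joukowski δ v)
  have hmul : joukowski δ v * k (joukowski δ v) =
      (2 * δ : ℝ) * (v * (k (joukowski δ v) / (1 + v ^ 2))) := by
    rw [joukowski]
    push_cast
    ring
  rw [hmul, Complex.im_ofReal_mul, joukowski_im, ← hc] at h
  refine nonneg_of_mul_nonneg_right (a := 2 * δ * c) ?_ (by positivity)
  linarith

theorem exists_probabilityMeasure_integral_one_div_one_sub (hδ : 0 < δ)
    (hk : DifferentiableOn ℂ k (doublySlitPlane δ)) (hk0 : k 0 = 1)
    (hpos : ∀ w, 0 ≤ (w * k w).im * w.im) :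
    ∃ Q : ProbabilityMeasure (Set.Icc (-1 : ℝ) 1), ∀ a : ℝ, |a| < 1 →
      ∫ x, 1 / (1 - a * x) ∂(Q : Measure (Set.Icc (-1 : ℝ) 1)) = (k (δ * a : ℝ)).re := by
  have hK : DifferentiableOn ℂ (fun v => k (joukowski δ v) / (1 + v ^ 2)) (Metric.ball 0 1) := by
    refine (hk.comp (differentiableOn_joukowski δ) fun v hv => ?_).div (by fun_prop) fun v hv => ?_
    · exact joukowski_mem_doublySlitPlane hδ (by simpa using hv)
    · exact one_add_sq_ne_zero_of_norm_lt_one (by simpa using hv)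
  obtain ⟨Q, hQ⟩ := exists_probabilityMeasure_integral_eq_re_of_typicallyReal hK
    (by simp [joukowski, hk0]) fun v hv => im_mul_joukowski_mul_im_nonneg hδ hpos hv
  refine ⟨Q, fun a ha => ?_⟩
  obtain ⟨u, hu, rfl⟩ := exists_two_mul_div_one_add_sq_eq ha
  have hu0 : 1 + u ^ 2 ≠ 0 := by positivity
  have hker : ∀ x : ℝ, 1 / (1 - 2 * u / (1 + u ^ 2) * x) =
      (1 + u ^ 2) * (1 / (1 - 2 * u * x + u ^ 2)) := by
    intro x
    have hden : 1 - 2 * u / (1 + u ^ 2) * x = (1 - 2 * u * x + u ^ 2) / (1 + u ^ 2) := by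
      field_simp
      ring
    rw [hden, one_div_div, mul_one_div]
  simp only [hker]
  rw [integral_const_mul, hQ u hu, joukowski_ofReal, ← Complex.ofReal_pow, ← Complex.ofReal_one,
    ← Complex.ofReal_add, Complex.div_ofReal_re, mul_div_cancel₀ _ hu0]

end SlitPlane

section RTransform

/-- `R` is a Pick function on the doubly slit plane: it is holomorphic there and maps each open
half-plane into its closure. In free probability these are the `R`-transforms of the measures
that are infinitely divisible with respect to free additive convolution and compactly supported. -/
structure IsSlitPick (δ : ℝ) (R : ℂ → ℂ) : Prop where
  differentiableOn : DifferentiableOn ℂ R (doublySlitPlane δ)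
  im_mul_im_nonneg : ∀ w, 0 ≤ (R w).im * w.im

/-- One step of the iteration solving `k = (1 - w R(w k))⁻¹`; in terms of the Cauchy transform
`G z`, with `w = z⁻¹` and `k = z G z`, this is Voiculescu's equation `R (G z) + (G z)⁻¹ = z`. -/
def rTransformStep (R : ℂ → ℂ) (w k : ℂ) : ℂ := (1 - w * R (w * k))⁻¹

/-- The approximate solutions of `k = (1 - w R(w k))⁻¹` obtained by iteration from `k = 1`. -/
def rTransformIter (R : ℂ → ℂ) (n : ℕ) (w : ℂ) : ℂ := (rTransformStep R w)^[n] 1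

variable {R : ℂ → ℂ} {δ η : ℝ} {w k : ℂ}

lemma rTransformIter_succ (R : ℂ → ℂ) (n : ℕ) (w : ℂ) :
    rTransformIter R (n + 1) w = rTransformStep R w (rTransformIter R n w) :=
  Function.iterate_succ_apply' _ _ _

lemma rTransformIter_apply_zero (R : ℂ → ℂ) (n : ℕ) : rTransformIter R n 0 = 1 := by
  cases n with
  | zero => rfl
  | succ n => simp [rTransformIter_succ, rTransformStep]

lemma im_mul_conj_rTransformStep_denom_pos (hR : ∀ z, 0 ≤ (R z).im * z.im)
    (hk : 0 < (w * k).im * w.im) : 0 < (w * conj (1 - w * R (w * k))).im * w.im := by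
  have hw : 0 < w.im * w.im := mul_self_pos.2 (right_ne_zero_of_mul hk.ne')
  have hRw : 0 ≤ (R (w * k)).im * w.im := by
    refine nonneg_of_mul_nonneg_left (b := (w * k).im * (w * k).im) ?_
      (mul_self_pos.2 (left_ne_zero_of_mul hk.ne'))
    nlinarith [mul_nonneg (hR (w * k)) hk.le]
  have him : (w * conj (1 - w * R (w * k))).im =
      w.im + Complex.normSq w * (R (w * k)).im := by
    rw [map_sub, map_one, map_mul, mul_sub, mul_one, ← mul_assoc, Complex.mul_conj,
      Complex.sub_im, Complex.im_ofReal_mul, Complex.conj_im, mul_neg, sub_neg_eq_add]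
  rw [him]
  nlinarith [mul_nonneg (Complex.normSq_nonneg w) hRw]

lemma rTransformStep_denom_ne_zero (hR : ∀ z, 0 ≤ (R z).im * z.im)
    (hk : 0 < (w * k).im * w.im) : 1 - w * R (w * k) ≠ 0 := by
  intro h
  simpa [h] using im_mul_conj_rTransformStep_denom_pos hR hk

lemma im_mul_rTransformStep_mul_im_pos (hR : ∀ z, 0 ≤ (R z).im * z.im)
    (hk : 0 < (w * k).im * w.im) : 0 < (w * rTransformStep R w k).im * w.im := by
  rw [rTransformStep, Complex.inv_def, ← mul_assoc, Complex.im_mul_ofReal, mul_right_comm]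
  exact mul_pos (im_mul_conj_rTransformStep_denom_pos hR hk)
    (inv_pos.2 (Complex.normSq_pos.2 (rTransformStep_denom_ne_zero hR hk)))

lemma im_mul_rTransformIter_mul_im_pos (hR : ∀ z, 0 ≤ (R z).im * z.im) (hw : w.im ≠ 0) (n : ℕ) :
    0 < (w * rTransformIter R n w).im * w.im := by
  induction n with
  | zero => simpa [rTransformIter] using mul_self_pos.2 hw
  | succ n ih => simpa only [rTransformIter_succ] using im_mul_rTransformStep_mul_im_pos hR ih

/-- Near `w = 0` the step is a contraction of the disc of radius `2`, which contains the initial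
value `1`; `η` measures how near. -/
structure IsContractionRadius (δ : ℝ) (R : ℂ → ℂ) (η : ℝ) : Prop where
  pos : 0 < η
  two_mul_le : 2 * η ≤ δ
  norm_sub_le : ∀ w : ℂ, ‖w‖ < η → ∀ k k' : ℂ, ‖k‖ ≤ 2 → ‖k'‖ ≤ 2 →
    ‖w * R (w * k) - w * R (w * k')‖ ≤ ‖k - k'‖ / 8

lemma exists_isContractionRadius (hδ : 0 < δ) (hR : AnalyticAt ℂ R 0) :
    ∃ η, IsContractionRadius δ R η := by
  obtain ⟨C, s, hs, hlip⟩ := hR.hasStrictFDerivAt.exists_lipschitzOnWith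
  obtain ⟨ρ, hρ, hball⟩ := Metric.mem_nhds_iff.1 hs
  have hev : ∀ᶠ η : ℝ in 𝓝 0, 2 * η < δ ∧ 2 * η < ρ ∧ η * (C * η) < 1 / 8 := by
    refine .and ?_ (.and ?_ ?_) <;>
      exact ContinuousAt.eventually_lt (by fun_prop) (by fun_prop) (by simp [hδ, hρ])
  obtain ⟨η, ⟨h1, h2, h3⟩, hη⟩ :=
    ((hev.filter_mono nhdsWithin_le_nhds).and (self_mem_nhdsWithin (s := Set.Ioi 0))).exists
  refine ⟨η, hη, h1.le, fun w hw k k' hk hk' => ?_⟩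
  have hmem : ∀ z : ℂ, ‖z‖ ≤ 2 → w * z ∈ s := fun z hz => hball <| by
    rw [mem_ball_zero_iff, norm_mul]
    nlinarith [norm_nonneg w, norm_nonneg z]
  calc ‖w * R (w * k) - w * R (w * k')‖
      = ‖w‖ * ‖R (w * k) - R (w * k')‖ := by rw [← mul_sub, norm_mul]
    _ ≤ ‖w‖ * (C * (‖w‖ * ‖k - k'‖)) := by
        gcongr
        simpa only [← mul_sub, norm_mul] using hlip.norm_sub_le (hmem k hk) (hmem k' hk')
    _ ≤ η * (C * (η * ‖k - k'‖)) := by gcongr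
    _ ≤ ‖k - k'‖ / 8 := by nlinarith [norm_nonneg (k - k')]

lemma one_sub_mul_pos_of_abs_lt_one {a x : ℝ} (ha : |a| < 1) (hx : x ∈ Set.Icc (-1) 1) :
    0 < 1 - a * x := by
  refine sub_pos.2 ((le_abs_self _).trans_lt ?_)
  rw [abs_mul]
  exact (mul_le_of_le_one_right (abs_nonneg a) (abs_le.2 hx)).trans_lt ha

namespace IsContractionRadius

variable (hη : IsContractionRadius δ R η) (hR0 : R 0 = 0)
include hη hR0

lemma half_le_norm_denom (hw : ‖w‖ < η) (hk : ‖k‖ ≤ 2) : 1 / 2 ≤ ‖1 - w * R (w * k)‖ := by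
  have h := hη.norm_sub_le w hw k 0 hk (by simp)
  simp only [mul_zero, hR0, sub_zero] at h
  have := norm_sub_norm_le 1 (w * R (w * k))
  rw [norm_one] at this
  linarith

lemma norm_rTransformStep_le (hw : ‖w‖ < η) (hk : ‖k‖ ≤ 2) : ‖rTransformStep R w k‖ ≤ 2 := by
  rw [rTransformStep, norm_inv]
  exact inv_le_of_inv_le₀ two_pos (by simpa using hη.half_le_norm_denom hR0 hw hk)

lemma norm_rTransformIter_le (hw : ‖w‖ < η) (n : ℕ) : ‖rTransformIter R n w‖ ≤ 2 := by
  induction n with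
  | zero => simp [rTransformIter]
  | succ n ih => simpa only [rTransformIter_succ] using hη.norm_rTransformStep_le hR0 hw ih

lemma norm_rTransformStep_sub_le (hw : ‖w‖ < η) {k' : ℂ} (hk : ‖k‖ ≤ 2) (hk' : ‖k'‖ ≤ 2) :
    ‖rTransformStep R w k - rTransformStep R w k'‖ ≤ 2⁻¹ * ‖k - k'‖ := by
  have hd := hη.half_le_norm_denom hR0 hw hk
  have hd' := hη.half_le_norm_denom hR0 hw hk'
  have hlip := hη.norm_sub_le w hw k k' hk hk'
  rw [rTransformStep, rTransformStep, inv_sub_inv (norm_pos_iff.1 (by linarith))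
    (norm_pos_iff.1 (by linarith)), norm_div, norm_mul, sub_sub_sub_cancel_left,
    div_le_iff₀ (by nlinarith), norm_sub_rev]
  have hprod : 1 / 2 * (1 / 2) ≤ ‖1 - w * R (w * k)‖ * ‖1 - w * R (w * k')‖ := by gcongr
  nlinarith [norm_sub_rev (w * R (w * k)) (w * R (w * k')), norm_nonneg (k - k')]

lemma tendsto_rTransformIter (hw : ‖w‖ < η) (hk : ‖k‖ ≤ 2) (hfix : rTransformStep R w k = k) :
    Tendsto (fun n => rTransformIter R n w) atTop (𝓝 k) := by
  have hgeom : ∀ n, ‖rTransformIter R n w - k‖ ≤ 2⁻¹ ^ n * ‖1 - k‖ := by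
    intro n
    induction n with
    | zero => simp [rTransformIter]
    | succ n ih =>
      rw [rTransformIter_succ, ← hfix, pow_succ', mul_assoc]
      refine (hη.norm_rTransformStep_sub_le hR0 hw (hη.norm_rTransformIter_le hR0 hw n) hk).trans ?_
      rw [hfix]
      gcongr
  refine tendsto_iff_norm_sub_tendsto_zero.2 (squeeze_zero (fun _ => norm_nonneg _) hgeom ?_)
  simpa using (tendsto_pow_atTop_nhds_zero_of_lt_one (r := (2⁻¹ : ℝ)) (by positivity)
    (by norm_num)).mul_const ‖1 - k‖

lemma differentiableOn_rTransformIter (hR : IsSlitPick δ R) (n : ℕ) :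
    DifferentiableOn ℂ (rTransformIter R n) (doublySlitPlane η) := by
  induction n with
  | zero => exact differentiableOn_const 1
  | succ n ih =>
    have hdich : ∀ w ∈ doublySlitPlane η, w.im ≠ 0 ∨ ‖w‖ < η := by
      intro w hw
      refine or_iff_not_imp_left.2 fun him => ?_
      lift w to ℝ using not_not.1 him
      simpa using hw rfl
    have hmaps : Set.MapsTo (fun w => w * rTransformIter R n w) (doublySlitPlane η)
        (doublySlitPlane δ) := by
      intro w hw him
      have hw' := (hdich w hw).resolve_left fun hw0 =>
        (im_mul_rTransformIter_mul_im_pos hR.im_mul_im_nonneg hw0 n).ne' (by simp [him])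
      refine (Complex.abs_re_le_norm _).trans_lt ?_
      rw [norm_mul]
      nlinarith [hη.norm_rTransformIter_le hR0 hw' n, hη.two_mul_le, norm_nonneg w]
    have hne : ∀ w ∈ doublySlitPlane η, 1 - w * R (w * rTransformIter R n w) ≠ 0 := by
      intro w hw
      rcases hdich w hw with him | hw'
      · exact rTransformStep_denom_ne_zero hR.im_mul_im_nonneg
          (im_mul_rTransformIter_mul_im_pos hR.im_mul_im_nonneg him n)
      · have := hη.half_le_norm_denom hR0 hw' (hη.norm_rTransformIter_le hR0 hw' n)
        exact norm_pos_iff.1 (by linarith)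
    have hdiff := DifferentiableOn.inv ((differentiableOn_const 1).sub
      (differentiableOn_id.mul (hR.differentiableOn.comp (differentiableOn_id.mul ih) hmaps))) hne
    exact hdiff.congr fun w _ => rTransformIter_succ R n w

theorem exists_probabilityMeasure_integral_eq_fixedPoint (hR : IsSlitPick δ R) :
    ∃ Q : ProbabilityMeasure (Set.Icc (-1 : ℝ) 1), ∀ a κ : ℝ, |a| < 1 → |κ| ≤ 2 →
      rTransformStep R (η * a : ℝ) κ = κ →
      ∫ x, 1 / (1 - a * x) ∂(Q : Measure (Set.Icc (-1 : ℝ) 1)) = κ := by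
  let ι := {q : ℝ × ℝ // |q.1| < 1 ∧ |q.2| ≤ 2 ∧ rTransformStep R (η * q.1 : ℝ) q.2 = q.2}
  have hcont : ∀ i : ι, Continuous fun x : Set.Icc (-1 : ℝ) 1 => 1 / (1 - i.1.1 * x) := fun i =>
    continuous_const.div (by fun_prop) fun x => (one_sub_mul_pos_of_abs_lt_one i.2.1 x.2).ne'
  have hpos : ∀ n w, 0 ≤ (w * rTransformIter R n w).im * w.im := by
    intro n w
    rcases eq_or_ne w.im 0 with him | him
    · rw [him, mul_zero]
    · exact (im_mul_rTransformIter_mul_im_pos hR.im_mul_im_nonneg him n).le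
  choose Q hQ using fun n => exists_probabilityMeasure_integral_one_div_one_sub hη.pos
    (hη.differentiableOn_rTransformIter hR0 hR n) (rTransformIter_apply_zero R n) (hpos n)
  have hlim : Tendsto
      (fun n (i : ι) => ∫ x, 1 / (1 - i.1.1 * x) ∂(Q n : Measure (Set.Icc (-1 : ℝ) 1)))
      atTop (𝓝 fun i => i.1.2) := by
    refine tendsto_pi_nhds.2 fun i => ?_
    obtain ⟨⟨a, κ⟩, ha, hκ, hfix⟩ := i
    have hnorm : ‖((η * a : ℝ) : ℂ)‖ < η := by
      rw [Complex.norm_real, Real.norm_eq_abs, abs_mul, abs_of_pos hη.pos]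
      exact mul_lt_of_lt_one_right hη.pos ha
    simpa only [hQ _ a ha, Complex.ofReal_re, Function.comp_def] using
      (Complex.continuous_re.tendsto _).comp
        (hη.tendsto_rTransformIter hR0 hnorm (by simpa using hκ) hfix)
  obtain ⟨P, hP⟩ := (isClosed_range_integral_probabilityMeasure hcont).mem_of_tendsto hlim
    (.of_forall fun n => Set.mem_range_self (Q n))
  exact ⟨P, fun a κ ha hκ hfix => congrFun hP ⟨(a, κ), ha, hκ, hfix⟩⟩

end IsContractionRadius

lemma cskKernel_div_eq_mul_one_div_one_sub {V : ℝ → ℝ} {m x : ℝ} (hη : 0 < η)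
    (hm : 0 < V m) :
    cskKernel V m (x / η) = V m / (V m + m ^ 2) * (1 / (1 - m / (η * (V m + m ^ 2)) * x)) := by
  have hden : V m + m ^ 2 ≠ 0 := by positivity
  have hker : V m + m * (m - x / η) = (V m + m ^ 2) * (1 - m / (η * (V m + m ^ 2)) * x) := by
    field_simp
    ring
  rw [cskKernel, hker, div_mul_div_comm, mul_one]

lemma rTransformStep_of_apply_div_eq {V : ℝ → ℝ} {m : ℝ} (hm : 0 < V m)
    (hR : R (m / V m : ℝ) = m) :
    rTransformStep R (m / (V m + m ^ 2) : ℝ) ((V m + m ^ 2) / V m : ℝ) =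
      ((V m + m ^ 2) / V m : ℝ) := by
  have hden : V m + m ^ 2 ≠ 0 := by positivity
  rw [rTransformStep, ← Complex.ofReal_mul, div_mul_div_cancel₀ hden, hR, ← Complex.ofReal_mul,
    ← Complex.ofReal_one, ← Complex.ofReal_sub, ← Complex.ofReal_inv]
  have hsub : 1 - m / (V m + m ^ 2) * m = V m / (V m + m ^ 2) := by
    field_simp
    ring
  rw [hsub, inv_div]

lemma ae_map_div_mem_Icc (hη : 0 < η) (Q : Measure (Set.Icc (-1 : ℝ) 1)) :
    ∀ᵐ x ∂Q.map (fun x : Set.Icc (-1 : ℝ) 1 => (x : ℝ) / η), x ∈ Set.Icc (-η⁻¹) η⁻¹ := by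
  refine (ae_map_iff (by fun_prop) measurableSet_Icc).2 (.of_forall fun x => ?_)
  rw [← one_div, ← neg_div]
  exact ⟨div_le_div_of_nonneg_right x.2.1 hη.le, div_le_div_of_nonneg_right x.2.2 hη.le⟩

-- In the parameter `m`, the fixed-point equation has `w = m / (V m + m²)`, `k = (V m + m²) / V m`
-- and so `w k = m / V m`, where `R` is known.
theorem memV_of_isSlitPick {V : ℝ → ℝ} (hδ : 0 < δ) (hR : IsSlitPick δ R) (hV : AnalyticAt ℝ V 0)
    (hV0 : V 0 = 1) (hRV : ∀ᶠ m in 𝓝 0, R (m / V m : ℝ) = m) : memV V := by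
  have hR0 : R 0 = 0 := by simpa using hRV.self_of_nhds
  obtain ⟨η, hη⟩ := exists_isContractionRadius hδ (hR.differentiableOn.analyticAt
    ((isOpen_doublySlitPlane δ).mem_nhds fun _ => by simpa using hδ))
  obtain ⟨Q, hQ⟩ := hη.exists_probabilityMeasure_integral_eq_fixedPoint hR0 hR
  have hVc := hV.continuousAt
  have hpos : ∀ᶠ m in 𝓝 0, 0 < V m := hVc.eventually (lt_mem_nhds (by simp [hV0]))
  have ha : ∀ᶠ m in 𝓝 0, |m / (η * (V m + m ^ 2))| < 1 := by
    refine ContinuousAt.eventually_lt (.abs (.div (by fun_prop) (by fun_prop) ?_)) (by fun_prop) ?_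
    all_goals simp [hV0, hη.pos.ne']
  have hκ : ∀ᶠ m in 𝓝 0, |(V m + m ^ 2) / V m| < 2 := by
    refine ContinuousAt.eventually_lt (.abs (.div (by fun_prop) (by fun_prop) ?_)) (by fun_prop) ?_
    all_goals simp [hV0]
  have := Measure.isProbabilityMeasure_map (μ := (Q : Measure (Set.Icc (-1 : ℝ) 1)))
    (f := fun x : Set.Icc (-1 : ℝ) 1 => (x : ℝ) / η) (by fun_prop)
  refine memV_of_integral_cskKernel_eq_one (ae_map_div_mem_Icc hη.pos Q) hV hV0 ?_
  filter_upwards [hRV, hpos, ha, hκ] with m hRm hm ham hκm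
  have hmass := hQ _ _ ham hκm.le (by
    rw [← div_div, div_right_comm, mul_div_cancel₀ _ hη.pos.ne']
    exact rTransformStep_of_apply_div_eq hm hRm)
  rw [integral_map (by fun_prop) (measurable_cskKernel V m).aestronglyMeasurable]
  simp only [cskKernel_div_eq_mul_one_div_one_sub hη.pos hm]
  rw [integral_const_mul, hmass, div_mul_div_cancel₀ (by positivity), div_self hm.ne']

lemma isSlitPick_id (δ : ℝ) : IsSlitPick δ id where
  differentiableOn := differentiableOn_id
  im_mul_im_nonneg w := mul_self_nonneg w.im

lemma IsSlitPick.comp_mul_div (hR : IsSlitPick δ R) {c : ℝ} (hc : c ≠ 0) :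
    IsSlitPick (δ / |c|) (fun w => R (c * w) / c) where
  differentiableOn := by
    refine (hR.differentiableOn.comp (by fun_prop) fun w hw him => ?_).div_const _
    rw [Complex.im_ofReal_mul] at him
    rw [Complex.re_ofReal_mul, abs_mul, mul_comm, ← lt_div_iff₀ (abs_pos.2 hc)]
    exact hw ((mul_eq_zero.1 him).resolve_left hc)
  im_mul_im_nonneg w := by
    have h : (R (c * w) / c).im * w.im = (R (c * w)).im * (c * w).im / c ^ 2 := by
      rw [Complex.div_ofReal_im, Complex.im_ofReal_mul]
      field_simp
    rw [h]
    exact div_nonneg (hR.im_mul_im_nonneg _) (sq_nonneg c)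

theorem memVinf_of_isSlitPick {V : ℝ → ℝ} (hδ : 0 < δ) (hR : IsSlitPick δ R)
    (hV : AnalyticAt ℝ V 0) (hV0 : V 0 = 1) (hRV : ∀ᶠ m in 𝓝 0, R (m / V m : ℝ) = m) :
    memVinf V := by
  intro c
  have hVc : AnalyticAt ℝ (fun m => V (c * m)) 0 :=
    AnalyticAt.fun_comp (by simpa using hV) (by fun_prop)
  rcases eq_or_ne c 0 with rfl | hc
  · exact memV_of_isSlitPick one_pos (isSlitPick_id 1) hVc (by simpa using hV0) (by simp [hV0])
  · refine memV_of_isSlitPick (by positivity) (hR.comp_mul_div hc) hVc (by simpa using hV0) ?_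
    have hscale : Tendsto (fun m => c * m) (𝓝 0) (𝓝 0) :=
      Continuous.tendsto' (by fun_prop) _ _ (mul_zero c)
    filter_upwards [hscale.eventually hRV] with m hm
    rw [← Complex.ofReal_mul, ← mul_div_assoc, hm, Complex.ofReal_mul,
      mul_div_cancel_left₀ _ (Complex.ofReal_ne_zero.2 hc)]

end RTransform

section ConformalMaps

lemma ultrafilter_le_cocompact_or_exists_le_nhds {X : Type*} [TopologicalSpace X]
    (u : Ultrafilter X) : (u : Filter X) ≤ cocompact X ∨ ∃ a, (u : Filter X) ≤ 𝓝 a := by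
  refine or_iff_not_imp_left.2 fun h => ?_
  obtain ⟨K, hK, hKu⟩ : ∃ K, IsCompact K ∧ Kᶜ ∉ u := by
    simpa [hasBasis_cocompact.ge_iff] using h
  obtain ⟨a, -, ha⟩ := hK.ultrafilter_le_nhds u
    (le_principal_iff.2 (Ultrafilter.compl_notMem_iff.1 hKu))
  exact ⟨a, ha⟩

/-- The Noshiro–Warschawski theorem. -/
theorem injOn_of_convex_of_im_deriv_neg {S : Set ℂ} {f f' : ℂ → ℂ} (hS : Convex ℝ S)
    (hf : ∀ z ∈ S, HasDerivAt f (f' z) z) (hf' : ∀ z ∈ S, (f' z).im < 0) : Set.InjOn f S := by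
  intro z hz w hw hzw
  by_contra hne
  have hmem : ∀ t ∈ Set.Icc (0 : ℝ) 1, z + t * (w - z) ∈ S := fun t ht => by
    simpa using hS.add_smul_sub_mem hz hw ht
  have hderiv : ∀ t ∈ Set.Icc (0 : ℝ) 1,
      HasDerivAt (fun t : ℝ => (f (z + t * (w - z)) / (w - z)).im) (f' (z + t * (w - z))).im t := by
    intro t ht
    have hline : HasDerivAt (fun t : ℂ => z + t * (w - z)) (w - z) t := by
      simpa using ((hasDerivAt_id (t : ℂ)).mul_const (w - z)).const_add z
    have hcomp := (((hf _ (hmem t ht)).comp (t : ℂ) hline).div_const (w - z)).comp_ofReal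
    rw [mul_div_cancel_right₀ _ (sub_ne_zero.2 (Ne.symm hne))] at hcomp
    exact Complex.imCLM.hasFDerivAt.comp_hasDerivAt t hcomp
  obtain ⟨t, ht, htf⟩ := exists_hasDerivAt_eq_slope _ _ one_pos
    (fun t ht => (hderiv t ht).continuousAt.continuousWithinAt)
    (fun t ht => hderiv t (Set.Ioo_subset_Icc_self ht))
  have hneg := hf' _ (hmem t (Set.Ioo_subset_Icc_self ht))
  simp [htf, hzw] at hneg

lemma differentiableAt_invFunOn {𝕜 : Type*} [NontriviallyNormedField 𝕜] [CompleteSpace 𝕜]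
    {f : 𝕜 → 𝕜} {f' z : 𝕜} {U : Set 𝕜} (hU : IsOpen U) (hinj : Set.InjOn f U) (hz : z ∈ U)
    (hf : HasStrictDerivAt f f' z) (hf' : f' ≠ 0) :
    DifferentiableAt 𝕜 (Function.invFunOn f U) (f z) := by
  refine (hf.to_local_left_inverse hf' ?_).hasDerivAt.differentiableAt
  filter_upwards [hU.mem_nhds hz] with w hw using hinj.leftInvOn_invFunOn hw

lemma eventually_im_pos_of_hasStrictDerivAt_one {φ : ℂ → ℂ} (hφ : HasStrictDerivAt φ 1 0)
    (hconj : ∀ᶠ w in 𝓝 0, φ (conj w) = conj (φ w)) : ∀ᶠ w in 𝓝 0, 0 < w.im → 0 < (φ w).im := by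
  have hpair : Tendsto (fun w : ℂ => (w, conj w)) (𝓝 0) (𝓝 (0, 0)) :=
    Continuous.tendsto' (by fun_prop) _ _ (by simp)
  filter_upwards [hpair.eventually (hφ.isLittleO.def (c := 1 / 2) (by norm_num)), hconj]
    with w hw hcw him
  have him2 : ∀ z : ℂ, z - conj z = (2 * z.im : ℝ) * Complex.I := Complex.sub_conj
  have hdiff : φ w - φ (conj w) - (w - conj w) = (2 * ((φ w).im - w.im) : ℝ) * Complex.I := by
    rw [hcw, him2, him2]
    push_cast
    ring
  simp only [smul_eq_mul, ContinuousLinearMap.toSpanSingleton_apply, mul_one] at hw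
  rw [hdiff, him2, norm_mul, norm_mul, Complex.norm_real, Complex.norm_real, Complex.norm_I,
    mul_one, mul_one, Real.norm_eq_abs, Real.norm_eq_abs,
    abs_of_pos (by linarith : 0 < 2 * w.im)] at hw
  linarith [neg_abs_le (2 * ((φ w).im - w.im))]

theorem exists_isSlitPick_of_upperHalfPlane {φ G : ℂ → ℂ} (hφ : AnalyticAt ℂ φ 0)
    (hconj : ∀ᶠ w in 𝓝 0, φ (conj w) = conj (φ w)) (hG : ∀ w, 0 < w.im → DifferentiableAt ℂ G w)
    (hGim : ∀ w, 0 < w.im → 0 ≤ (G w).im) (hGφ : ∀ᶠ w in 𝓝 0, 0 < w.im → G w = φ w) :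
    ∃ δ > 0, ∃ R, IsSlitPick δ R ∧ ∀ x : ℝ, R x = φ x := by
  obtain ⟨δ, hδ, hball⟩ := Metric.eventually_nhds_iff.1
    (hφ.eventually_analyticAt.and (hconj.and hGφ))
  let R : ℂ → ℂ := fun w => if 0 < w.im then G w else if w.im < 0 then conj (G (conj w)) else φ w
  have hRφ : Set.EqOn R φ (Metric.ball 0 δ) := by
    intro w hw
    simp only [R]
    split_ifs with h1 h2
    · exact (hball hw).2.2 h1
    · have hw' : dist (conj w) 0 < δ := by simpa using hw
      rw [(hball hw').2.2 (by simpa using h2), (hball hw).2.1, Complex.conj_conj]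
    · rfl
  refine ⟨δ, hδ, R, ⟨fun w hw => DifferentiableAt.differentiableWithinAt ?_, fun w => ?_⟩, ?_⟩
  · rcases lt_trichotomy w.im 0 with him | him | him
    · have hlower : R =ᶠ[𝓝 w] conj ∘ G ∘ conj := by
        filter_upwards [Complex.continuous_im.continuousAt.eventually (gt_mem_nhds him)] with z hz
        simp [R, hz, hz.le]
      exact (differentiableAt_conj_conj_iff.2 (hG _ (by simpa using him))).congr_of_eventuallyEq
        hlower
    · have hw' : w ∈ Metric.ball 0 δ := by
        lift w to ℝ using him
        simpa using hw (Complex.ofReal_im w)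
      exact (hball hw').1.differentiableAt.congr_of_eventuallyEq
        (hRφ.eventuallyEq_of_mem (Metric.isOpen_ball.mem_nhds hw'))
    · have hupper : R =ᶠ[𝓝 w] G := by
        filter_upwards [Complex.continuous_im.continuousAt.eventually (lt_mem_nhds him)] with z hz
        simp [R, hz]
      exact (hG w him).congr_of_eventuallyEq hupper
  · simp only [R]
    split_ifs with h1 h2
    · exact mul_nonneg (hGim w h1) h1.le
    · exact mul_nonneg_of_nonpos_of_nonpos
        (by simpa using hGim (conj w) (by simpa using h2)) h2.le
    · simp [le_antisymm (not_lt.1 h1) (not_lt.1 h2)]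
  · simp [R]

lemma ne_zero_of_im_pos {z : ℂ} (hz : 0 < z.im) : z ≠ 0 := by
  rintro rfl
  exact hz.ne' rfl

lemma arg_mem_Ioo_of_im_pos {z : ℂ} (hz : 0 < z.im) : z.arg ∈ Set.Ioo 0 Real.pi :=
  ⟨(Complex.arg_nonneg_iff.2 hz.le).lt_of_ne'
      fun h => hz.ne' (Complex.arg_eq_zero_iff.1 h).2,
    (Complex.arg_le_pi z).lt_of_ne fun h => hz.ne' (Complex.arg_eq_pi_iff.1 h).2⟩

lemma arg_div_eq_arg_sub_arg {z w : ℂ} (hz : 0 < z.im) (hw : 0 < w.im) :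
    (z / w).arg = z.arg - w.arg := by
  have hz' := arg_mem_Ioo_of_im_pos hz
  have hw' := arg_mem_Ioo_of_im_pos hw
  have hinv : w⁻¹.arg = -w.arg := by rw [Complex.arg_inv, if_neg hw'.2.ne]
  rw [div_eq_mul_inv, sub_eq_add_neg, ← hinv]
  refine (Complex.arg_mul_eq_add_arg_iff (ne_zero_of_im_pos hz)
    (inv_ne_zero (ne_zero_of_im_pos hw))).2 ?_
  rw [hinv]
  exact ⟨by linarith [hz'.1, hw'.2], by linarith [hz'.2, hw'.1]⟩

lemma continuousWithinAt_arg_im_nonneg {z : ℂ} (hz : z ≠ 0) :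
    ContinuousWithinAt Complex.arg {w | 0 ≤ w.im} z := by
  by_cases hslit : z ∈ Complex.slitPlane
  · exact (Complex.continuousAt_arg hslit).continuousWithinAt
  · rw [Complex.mem_slitPlane_iff, not_or, not_lt, not_not] at hslit
    exact Complex.continuousWithinAt_arg_of_re_neg_of_im_zero
      (hslit.1.lt_of_ne fun hre => hz (Complex.ext hre hslit.2)) hslit.2

end ConformalMaps

section LogRatio

lemma im_one_add_mul_pos {b : ℝ} {m : ℂ} (hb : 0 < b) (hm : 0 < m.im) : 0 < (1 + b * m).im := by
  simpa using mul_pos hb hm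

variable {ι : Type*} [Fintype ι] {β p : ι → ℝ} {k : ι} {m s : ℂ}

/-- The logarithm of the complexified variance function `m ↦ ∏ k, (1 + β k * m) ^ p k`. -/
def logVar (β p : ι → ℝ) (m : ℂ) : ℂ := ∑ k, p k * Complex.log (1 + β k * m)

/-- The logarithm of `m / V m`, where `V m = ∏ k, (1 + β k * m) ^ p k`. In the notation of free
probability it is the logarithm of the compositional inverse of the `R`-transform. -/
def logRatio (β p : ι → ℝ) (m : ℂ) : ℂ := Complex.log m - logVar β p m

/-- The derivative of `logRatio β p` on the upper half-plane. -/
def logRatioDeriv (β p : ι → ℝ) (m : ℂ) : ℂ := m⁻¹ - ∑ k, p k * (β k / (1 + β k * m))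

@[simp]
lemma logVar_zero : logVar β p 0 = 0 := by
  simp [logVar]

lemma hasStrictDerivAt_logVar (hm : ∀ k, 1 + β k * m ∈ Complex.slitPlane) :
    HasStrictDerivAt (logVar β p) (∑ k, p k * (β k / (1 + β k * m))) m := by
  refine HasStrictDerivAt.fun_sum fun k _ => HasStrictDerivAt.const_mul _ ?_
  have h := ((hasStrictDerivAt_id m).const_mul (β k : ℂ)).const_add 1
  simpa using h.clog (hm k)

lemma hasStrictDerivAt_logRatio (hβ : ∀ k, 0 < β k) (hm : 0 < m.im) :
    HasStrictDerivAt (logRatio β p) (logRatioDeriv β p m) m :=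
  (Complex.hasStrictDerivAt_log (.inr hm.ne')).sub
    (hasStrictDerivAt_logVar fun k => .inr (im_one_add_mul_pos (hβ k) hm).ne')

lemma im_mul_logRatioDeriv_neg [Nonempty ι] (hβ : ∀ k, 0 < β k) (hp : ∀ k, 0 < p k)
    (hm : 0 < m.im) : (m * logRatioDeriv β p m).im < 0 := by
  have hterm : ∀ k, 0 < (m * (p k * (β k / (1 + β k * m)))).im := by
    intro k
    have h1 := im_one_add_mul_pos (hβ k) hm
    have hfrac : m * (p k * (β k / (1 + β k * m))) = p k * (1 - (1 + β k * m)⁻¹) := by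
      linear_combination (p k : ℂ) * mul_inv_cancel₀ (ne_zero_of_im_pos h1)
    rw [hfrac, Complex.im_ofReal_mul, Complex.sub_im, Complex.one_im, Complex.inv_im, zero_sub,
      neg_div, neg_neg]
    exact mul_pos (hp k) (div_pos h1 (Complex.normSq_pos.2 (ne_zero_of_im_pos h1)))
  rw [logRatioDeriv, mul_sub, mul_inv_cancel₀ (ne_zero_of_im_pos hm), Finset.mul_sum,
    Complex.sub_im, Complex.im_sum, Complex.one_im, zero_sub, neg_lt_zero]
  exact Finset.sum_pos (fun k _ => hterm k) Finset.univ_nonempty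

lemma logRatioDeriv_ne_zero [Nonempty ι] (hβ : ∀ k, 0 < β k) (hp : ∀ k, 0 < p k)
    (hm : 0 < m.im) : logRatioDeriv β p m ≠ 0 := by
  intro h
  simpa [h] using im_mul_logRatioDeriv_neg hβ hp hm

lemma convex_setOf_im_mem_Ioo (a b : ℝ) : Convex ℝ {u : ℂ | u.im ∈ Set.Ioo a b} :=
  (convex_Ioo a b).linear_preimage Complex.imLm

lemma injOn_logRatio [Nonempty ι] (hβ : ∀ k, 0 < β k) (hp : ∀ k, 0 < p k) :
    Set.InjOn (logRatio β p) {m | 0 < m.im} := by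
  have hexp : ∀ u : ℂ, u.im ∈ Set.Ioo 0 Real.pi → 0 < (Complex.exp u).im := by
    intro u hu
    rw [Complex.exp_im]
    exact mul_pos (Real.exp_pos _) (Real.sin_pos_of_mem_Ioo hu)
  have hinj := injOn_of_convex_of_im_deriv_neg (convex_setOf_im_mem_Ioo 0 Real.pi)
    (fun u hu => (hasStrictDerivAt_logRatio (p := p) hβ (hexp u hu)).hasDerivAt.comp u
      (Complex.hasDerivAt_exp u))
    (fun u hu => by
      rw [mul_comm]
      exact im_mul_logRatioDeriv_neg hβ hp (hexp u hu))
  intro m hm m' hm' heq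
  have hlog : Complex.log m = Complex.log m' := hinj
    (by simpa [Complex.log_im] using arg_mem_Ioo_of_im_pos hm)
    (by simpa [Complex.log_im] using arg_mem_Ioo_of_im_pos hm')
    (by simpa [Complex.exp_log, ne_zero_of_im_pos hm, ne_zero_of_im_pos hm'] using heq)
  rw [← Complex.exp_log (ne_zero_of_im_pos hm), hlog, Complex.exp_log (ne_zero_of_im_pos hm')]

lemma exp_logRatio (hm : m ≠ 0) :
    Complex.exp (logRatio β p m) = m * Complex.exp (-logVar β p m) := by
  rw [logRatio, sub_eq_add_neg, Complex.exp_add, Complex.exp_log hm]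

lemma norm_exp_logVar (hm : ∀ k, 1 + β k * m ≠ 0) :
    ‖Complex.exp (logVar β p m)‖ = ∏ k, ‖1 + β k * m‖ ^ p k := by
  rw [Complex.norm_exp, logVar, Complex.re_sum, Real.exp_sum]
  refine Finset.prod_congr rfl fun k _ => ?_
  rw [Complex.re_ofReal_mul, Complex.log_re, Real.rpow_def_of_pos (norm_pos_iff.2 (hm k)), mul_comm]

lemma norm_exp_logRatio_mul_prod (hβ : ∀ k, 0 < β k) (hm : 0 < m.im) :
    ‖Complex.exp (logRatio β p m)‖ * ∏ k, ‖1 + β k * m‖ ^ p k = ‖m‖ := by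
  rw [← norm_exp_logVar fun k => ne_zero_of_im_pos (im_one_add_mul_pos (hβ k) hm), ← norm_mul,
    exp_logRatio (ne_zero_of_im_pos hm), mul_assoc, ← Complex.exp_add, neg_add_cancel,
    Complex.exp_zero, mul_one]

lemma im_logVar (β p : ι → ℝ) (m : ℂ) :
    (logVar β p m).im = ∑ k, p k * (1 + β k * m).arg := by
  simp only [logVar, Complex.im_sum, Complex.im_ofReal_mul, Complex.log_im]

lemma mul_arg_le_im_logVar (hβ : ∀ k, 0 < β k) (hp : ∀ k, 0 < p k) (hm : 0 < m.im) (k : ι) :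
    p k * (1 + β k * m).arg ≤ (logVar β p m).im := by
  rw [im_logVar]
  exact Finset.single_le_sum (f := fun j => p j * (1 + β j * m).arg)
    (fun j _ => mul_nonneg (hp j).le (arg_mem_Ioo_of_im_pos (im_one_add_mul_pos (hβ j) hm)).1.le)
    (Finset.mem_univ k)

lemma im_logVar_nonneg (hβ : ∀ k, 0 < β k) (hp : ∀ k, 0 < p k) (hm : 0 < m.im) :
    0 ≤ (logVar β p m).im := by
  rw [im_logVar]
  exact Finset.sum_nonneg fun k _ =>
    mul_nonneg (hp k).le (arg_mem_Ioo_of_im_pos (im_one_add_mul_pos (hβ k) hm)).1.le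

lemma im_logRatio_le (hβ : ∀ k, 0 < β k) (hp : ∀ k, 0 < p k) (hk : 1 ≤ p k) (hm : 0 < m.im) :
    (logRatio β p m).im ≤ (m / (1 + β k * m)).arg := by
  have h1 := im_one_add_mul_pos (hβ k) hm
  rw [arg_div_eq_arg_sub_arg hm h1, logRatio, Complex.sub_im, Complex.log_im]
  nlinarith [mul_arg_le_im_logVar hβ hp hm k, (arg_mem_Ioo_of_im_pos h1).1]

end LogRatio

section LogRatioRange

variable {ι : Type*} [Fintype ι] {β p : ι → ℝ} {k : ι} {a s : ℂ} {u : Filter ℂ} [u.NeBot]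

lemma im_le_zero_of_tendsto_logRatio (hβ : ∀ k, 0 < β k) (hp : ∀ k, 0 < p k) (hk : 1 ≤ p k)
    (hu : ∀ᶠ m in u, 0 < m.im) (hs : Tendsto (logRatio β p) u (𝓝 s)) {r : ℝ} (hr : 0 < r)
    (hratio : Tendsto (fun m : ℂ => m / (1 + β k * m)) u (𝓝 r)) : s.im ≤ 0 := by
  have harg : Tendsto (fun m : ℂ => (m / (1 + β k * m)).arg) u (𝓝 0) := by
    rw [← Complex.arg_ofReal_of_nonneg hr.le]
    exact (Complex.continuousAt_arg (Complex.ofReal_mem_slitPlane.2 hr)).tendsto.comp hratio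
  refine le_of_tendsto_of_tendsto ((Complex.continuous_im.tendsto s).comp hs) harg ?_
  filter_upwards [hu] with m hm using im_logRatio_le hβ hp hk hm

lemma norm_exp_mul_prod_eq_of_tendsto_logRatio (hβ : ∀ k, 0 < β k) (hp : ∀ k, 0 < p k)
    (hu : ∀ᶠ m in u, 0 < m.im) (hs : Tendsto (logRatio β p) u (𝓝 s)) (ha : u ≤ 𝓝 a) :
    ‖Complex.exp s‖ * ∏ k, ‖1 + β k * a‖ ^ p k = ‖a‖ := by
  have hprod : Tendsto (fun m : ℂ => ∏ k, ‖1 + β k * m‖ ^ p k) u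
      (𝓝 (∏ k, ‖1 + β k * a‖ ^ p k)) := by
    refine tendsto_finsetProd _ fun k _ => ?_
    have hc : Continuous fun m : ℂ => ‖1 + β k * m‖ := by fun_prop
    exact ((hc.tendsto a).mono_left ha).rpow_const (.inr (hp k).le)
  have hexp := ((Complex.continuous_exp.tendsto s).comp hs).norm
  refine tendsto_nhds_unique (hexp.mul hprod) (((continuous_norm.tendsto a).mono_left ha).congr' ?_)
  filter_upwards [hu] with m hm using (norm_exp_logRatio_mul_prod hβ hm).symm

lemma ne_zero_of_tendsto_logRatio (hβ : ∀ k, 0 < β k) (hp : ∀ k, 0 < p k)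
    (hu : ∀ᶠ m in u, 0 < m.im) (hs : Tendsto (logRatio β p) u (𝓝 s)) (ha : u ≤ 𝓝 a) :
    a ≠ 0 ∧ ∀ k, 1 + β k * a ≠ 0 := by
  have h := norm_exp_mul_prod_eq_of_tendsto_logRatio hβ hp hu hs ha
  have ha0 : a ≠ 0 := by
    rintro rfl
    simp [Complex.exp_ne_zero] at h
  refine ⟨ha0, fun k hk => norm_ne_zero_iff.2 ha0 ?_⟩
  rw [← h, Finset.prod_eq_zero (Finset.mem_univ k), mul_zero]
  rw [hk, norm_zero, Real.zero_rpow (hp k).ne']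

lemma im_eq_arg_of_tendsto_logRatio {a : ℝ} (ha0 : a ≠ 0) (hak : ∀ k, 0 < 1 + β k * a)
    (hu : ∀ᶠ m in u, 0 < m.im) (hs : Tendsto (logRatio β p) u (𝓝 s)) (ha : u ≤ 𝓝 (a : ℂ)) :
    s.im = (a : ℂ).arg := by
  have hvar : (logVar β p a).im = 0 := by
    rw [im_logVar]
    refine Finset.sum_eq_zero fun k _ => ?_
    rw [← Complex.ofReal_mul, ← Complex.ofReal_one, ← Complex.ofReal_add,
      Complex.arg_ofReal_of_nonneg (hak k).le, mul_zero]
  have hvar' : Tendsto (fun m => (logVar β p m).im) u (𝓝 0) := by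
    rw [← hvar]
    refine (Complex.continuous_im.continuousAt.comp (hasStrictDerivAt_logVar
      fun k => ?_).hasDerivAt.continuousAt).tendsto.mono_left ha
    exact_mod_cast Complex.ofReal_mem_slitPlane.2 (hak k)
  have harg : Tendsto Complex.arg u (𝓝 (a : ℂ).arg) :=
    (continuousWithinAt_arg_im_nonneg (Complex.ofReal_ne_zero.2 ha0)).mono_left
      (le_inf ha (le_principal_iff.2 (hu.mono fun m hm => hm.le)))
  refine tendsto_nhds_unique ((Complex.continuous_im.tendsto s).comp hs) ?_
  simpa [Function.comp_def, logRatio, Complex.log_im] using harg.sub hvar'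

lemma tendsto_div_one_add_mul_cocompact {b : ℝ} (hb : b ≠ 0) :
    Tendsto (fun m : ℂ => m / (1 + b * m)) (cocompact ℂ) (𝓝 (b⁻¹ : ℝ)) := by
  have hinv : Tendsto (fun m : ℂ => (m⁻¹ + b)⁻¹) (cocompact ℂ) (𝓝 (b⁻¹ : ℝ)) := by
    have := (tendsto_inv₀_cobounded (α := ℂ)).add_const (b : ℂ)
    rw [zero_add, Metric.cobounded_eq_cocompact] at this
    simpa using this.inv₀ (Complex.ofReal_ne_zero.2 hb)
  refine hinv.congr' ?_
  filter_upwards [(isCompact_singleton (x := (0 : ℂ))).compl_mem_cocompact] with m hm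
  have hfactor : 1 + b * m = m * (m⁻¹ + b) := by
    rw [mul_add, mul_inv_cancel₀ hm, mul_comm]
  rw [hfactor, div_mul_cancel_left₀ hm]

lemma im_pos_of_tendsto_logRatio (hβ : ∀ k, 0 < β k) (hp : ∀ k, 0 < p k) (hk : 1 ≤ p k)
    (hmax : ∀ j, β j ≤ β k) (hsim : s.im ∈ Set.Ioo 0 Real.pi)
    (hu : ∀ᶠ m in u, 0 < m.im) (hs : Tendsto (logRatio β p) u (𝓝 s)) (ha : u ≤ 𝓝 a) :
    0 < a.im := by
  obtain ⟨ha0, hak⟩ := ne_zero_of_tendsto_logRatio hβ hp hu hs ha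
  have him : 0 ≤ a.im := ge_of_tendsto ((Complex.continuous_im.tendsto a).mono_left ha)
    (hu.mono fun m hm => hm.le)
  refine him.lt_of_ne fun him0 => ?_
  lift a to ℝ using him0.symm
  rw [Complex.ofReal_ne_zero] at ha0
  have hak : ∀ k, 1 + β k * a ≠ 0 := fun k => by exact_mod_cast hak k
  rcases (hak k).lt_or_gt with hneg | hpos
  · have ha_neg : a < 0 := by
      by_contra! h
      nlinarith [hβ k]
    refine hsim.1.not_ge (im_le_zero_of_tendsto_logRatio hβ hp hk hu hs
      (div_pos_of_neg_of_neg ha_neg hneg) ?_)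
    have hc : ContinuousAt (fun m : ℂ => m / (1 + β k * m)) a :=
      continuousAt_id.div (by fun_prop) (by exact_mod_cast hak k)
    simpa using hc.tendsto.mono_left ha
  · have hak' : ∀ j, 0 < 1 + β j * a := by
      intro j
      rcases le_or_gt 0 a with h | h
      · have := hβ j
        positivity
      · nlinarith [hmax j]
    have harg := im_eq_arg_of_tendsto_logRatio ha0 hak' hu hs ha
    rcases ha0.lt_or_gt with h | h
    · exact hsim.2.ne (harg.trans (Complex.arg_ofReal_of_neg h))
    · exact hsim.1.ne' (harg.trans (Complex.arg_ofReal_of_nonneg h.le))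

lemma isOpen_image_logRatio [Nonempty ι] (hβ : ∀ k, 0 < β k) (hp : ∀ k, 0 < p k) :
    IsOpen (logRatio β p '' {m | 0 < m.im}) := by
  refine isOpen_iff_mem_nhds.2 ?_
  rintro _ ⟨m, hm, rfl⟩
  rw [← (hasStrictDerivAt_logRatio hβ hm).map_nhds_eq (logRatioDeriv_ne_zero hβ hp hm)]
  exact image_mem_map ((isOpen_lt continuous_const Complex.continuous_im).mem_nhds hm)

lemma exists_im_logRatio_mem_Ioo (β p : ι → ℝ) :
    ∃ m : ℂ, 0 < m.im ∧ (logRatio β p m).im ∈ Set.Ioo 0 Real.pi := by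
  have hray : Tendsto (fun t : ℝ => (t * Complex.I : ℂ)) (𝓝[>] 0) (𝓝 0) :=
    tendsto_nhdsWithin_of_tendsto_nhds (Continuous.tendsto' (by fun_prop) _ _ (by simp))
  have hvar : Tendsto (fun t : ℝ => (logVar β p (t * Complex.I)).im) (𝓝[>] 0) (𝓝 0) := by
    have hcont := (hasStrictDerivAt_logVar (β := β) (p := p) (m := 0) (by simp)).hasDerivAt
    simpa [Function.comp_def] using
      (Complex.continuous_im.continuousAt.comp hcont.continuousAt).tendsto.comp hray
  have hsmall := hvar.eventually (Metric.ball_mem_nhds 0 (half_pos Real.pi_pos))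
  obtain ⟨t, ht, ht0⟩ := (hsmall.and (self_mem_nhdsWithin (s := Set.Ioi (0 : ℝ)))).exists
  have harg : (t * Complex.I : ℂ).arg = Real.pi / 2 := by
    rw [Complex.arg_real_mul _ ht0, Complex.arg_I]
  rw [Real.dist_0_eq_abs, abs_lt] at ht
  refine ⟨t * Complex.I, by simpa using ht0, ?_⟩
  rw [logRatio, Complex.sub_im, Complex.log_im, harg]
  exact ⟨by linarith, by linarith⟩

/-- The cluster values of `logRatio β p` at the real axis and at infinity avoid the strip, so the
image is relatively closed in the strip, besides being open and meeting it. -/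
theorem strip_subset_image_logRatio (hβ : ∀ k, 0 < β k) (hp : ∀ k, 0 < p k) (hk : 1 ≤ p k)
    (hmax : ∀ j, β j ≤ β k) :
    {s : ℂ | s.im ∈ Set.Ioo 0 Real.pi} ⊆ logRatio β p '' {m | 0 < m.im} := by
  have : Nonempty ι := ⟨k⟩
  refine (convex_setOf_im_mem_Ioo 0 Real.pi).isPreconnected.subset_of_closure_inter_subset
    (isOpen_image_logRatio hβ hp) ?_ ?_
  · obtain ⟨m, hm, hFm⟩ := exists_im_logRatio_mem_Ioo β p
    exact ⟨_, hFm, m, hm, rfl⟩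
  · rintro s ⟨hscl, hs⟩
    obtain ⟨v, hvmem, hvs⟩ := mem_closure_iff_ultrafilter.1 hscl
    obtain ⟨u, hu, rfl⟩ : ∃ u : Ultrafilter ℂ, {m : ℂ | 0 < m.im} ∈ u ∧ u.map (logRatio β p) = v :=
      ⟨Ultrafilter.ofComapInfPrincipal hvmem, Ultrafilter.ofComapInfPrincipal_mem hvmem,
        Ultrafilter.ofComapInfPrincipal_eq_of_map hvmem⟩
    rcases ultrafilter_le_cocompact_or_exists_le_nhds u with hinf | ⟨a, ha⟩
    · exact absurd (im_le_zero_of_tendsto_logRatio hβ hp hk hu hvs (inv_pos.2 (hβ k))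
        ((tendsto_div_one_add_mul_cocompact (hβ k).ne').mono_left hinf)) hs.1.not_ge
    · have ha_im := im_pos_of_tendsto_logRatio hβ hp hk hmax hs hu hvs ha
      exact ⟨a, ha_im, tendsto_nhds_unique
        ((hasStrictDerivAt_logRatio hβ ha_im).hasDerivAt.continuousAt.tendsto.mono_left ha) hvs⟩

end LogRatioRange

section RTransformOfProduct

lemma exists_localInverse_conj {h : ℂ → ℂ} (hh : AnalyticAt ℂ h 0) (h0 : h 0 = 0)
    (h1 : deriv h 0 = 1) (hconj : ∀ᶠ m in 𝓝 0, h (conj m) = conj (h m)) :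
    ∃ φ : ℂ → ℂ, AnalyticAt ℂ φ 0 ∧ HasStrictDerivAt φ 1 0 ∧ (∀ᶠ w in 𝓝 0, h (φ w) = w) ∧
      (∀ᶠ m in 𝓝 0, φ (h m) = m) ∧ ∀ᶠ w in 𝓝 0, φ (conj w) = conj (φ w) := by
  have hne : deriv h 0 ≠ 0 := by simp [h1]
  have hanalytic := hh.analyticAt_localInverse hne
  have hderiv := hh.hasStrictDerivAt.to_localInverse hne
  have hright := hh.hasStrictDerivAt.eventually_right_inverse hne
  have hleft := hh.hasStrictDerivAt.eventually_left_inverse hne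
  set φ := hh.hasStrictDerivAt.localInverse h (deriv h 0) 0 hne
  have hφ0 : φ 0 = 0 := by simpa [h0] using hleft.self_of_nhds
  rw [h0] at hanalytic hright hderiv
  rw [h1, inv_one] at hderiv
  have hφ : Tendsto φ (𝓝 0) (𝓝 0) := by simpa [hφ0] using hanalytic.continuousAt.tendsto
  have hφconj : Tendsto (fun w => conj (φ w)) (𝓝 0) (𝓝 0) :=
    (Continuous.tendsto' Complex.continuous_conj 0 0 (map_zero _)).comp hφ
  refine ⟨φ, hanalytic, hderiv, hright, hleft, ?_⟩
  filter_upwards [hright, hφconj.eventually hleft, hφ.eventually hconj] with w hw hleftw hconjw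
  rwa [hconjw, hw] at hleftw

variable {ι : Type*} [Fintype ι] {β p : ι → ℝ} {k : ι}

lemma analyticAt_logVar_zero (β p : ι → ℝ) : AnalyticAt ℂ (logVar β p) 0 := by
  unfold logVar
  refine Finset.analyticAt_fun_sum _ fun k _ => analyticAt_const.mul (AnalyticAt.clog ?_ ?_)
  · fun_prop
  · simp

lemma eventually_logVar_conj (β p : ι → ℝ) :
    ∀ᶠ m in 𝓝 0, logVar β p (conj m) = conj (logVar β p m) := by
  have hslit : ∀ k, ∀ᶠ m : ℂ in 𝓝 0, 1 + β k * m ∈ Complex.slitPlane := fun k =>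
    ContinuousAt.eventually_mem (by fun_prop) (Complex.isOpen_slitPlane.mem_nhds (by simp))
  filter_upwards [eventually_all.2 hslit] with m hm
  simp only [logVar, map_sum, map_mul, Complex.conj_ofReal]
  refine Finset.sum_congr rfl fun k _ => ?_
  rw [← Complex.log_conj _ (Complex.slitPlane_arg_ne_pi (hm k)), map_add, map_one, map_mul,
    Complex.conj_ofReal]

lemma exists_localInverse_mul_exp_neg_logVar (β p : ι → ℝ) :
    ∃ φ : ℂ → ℂ, AnalyticAt ℂ φ 0 ∧ HasStrictDerivAt φ 1 0 ∧
      (∀ᶠ w in 𝓝 0, φ w * Complex.exp (-logVar β p (φ w)) = w) ∧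
      (∀ᶠ m in 𝓝 0, φ (m * Complex.exp (-logVar β p m)) = m) ∧
      ∀ᶠ w in 𝓝 0, φ (conj w) = conj (φ w) := by
  have hexp : AnalyticAt ℂ (fun m => Complex.exp (-logVar β p m)) 0 :=
    (analyticAt_logVar_zero β p).neg.cexp
  refine exists_localInverse_conj (h := fun m => m * Complex.exp (-logVar β p m))
    (analyticAt_id.mul hexp) (zero_mul _) ?_ ?_
  · simpa using ((hasDerivAt_id' (0 : ℂ)).fun_mul hexp.differentiableAt.hasDerivAt).deriv
  · filter_upwards [eventually_logVar_conj β p] with m hm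
    rw [hm, map_mul, ← Complex.exp_conj, map_neg]

lemma eventually_log_mul_exp_neg_logVar (hβ : ∀ k, 0 < β k) (hp : ∀ k, 0 < p k) :
    ∀ᶠ m in 𝓝 0, 0 < m.im →
      Complex.log (m * Complex.exp (-logVar β p m)) = logRatio β p m := by
  have hsmall : ∀ᶠ m in 𝓝 0, (logVar β p m).im < Real.pi :=
    (Complex.continuous_im.continuousAt.comp (analyticAt_logVar_zero β p).continuousAt).eventually
      (gt_mem_nhds (by simpa using Real.pi_pos))
  filter_upwards [hsmall] with m hlt hm
  have hnonneg := im_logVar_nonneg hβ hp hm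
  have him : (logRatio β p m).im = m.arg - (logVar β p m).im := by
    rw [logRatio, Complex.sub_im, Complex.log_im]
  have harg := arg_mem_Ioo_of_im_pos hm
  rw [← exp_logRatio (ne_zero_of_im_pos hm)]
  exact Complex.log_exp (by linarith [harg.1]) (by linarith [harg.2])

lemma exists_leftInverse_exp_logRatio (hβ : ∀ k, 0 < β k) (hp : ∀ k, 0 < p k) (hk : 1 ≤ p k)
    (hmax : ∀ j, β j ≤ β k) :
    ∃ G : ℂ → ℂ, (∀ w, 0 < w.im → DifferentiableAt ℂ G w) ∧ (∀ w, 0 < w.im → 0 < (G w).im) ∧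
      ∀ w m, 0 < m.im → logRatio β p m = Complex.log w → G w = m := by
  have : Nonempty ι := ⟨k⟩
  have hinj := injOn_logRatio hβ hp
  let g : ℂ → ℂ := Function.invFunOn (logRatio β p) {m | 0 < m.im}
  have hlog : ∀ w : ℂ, 0 < w.im → ∃ m, 0 < m.im ∧ logRatio β p m = Complex.log w := fun w hw =>
    strip_subset_image_logRatio hβ hp hk hmax
      (by simpa [Complex.log_im] using arg_mem_Ioo_of_im_pos hw)
  refine ⟨fun w => g (Complex.log w), fun w hw => ?_, fun w hw => ?_, fun w m hm hmw => ?_⟩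
  · obtain ⟨m, hm, hmw⟩ := hlog w hw
    have hg : DifferentiableAt ℂ g (Complex.log w) := by
      rw [← hmw]
      exact differentiableAt_invFunOn (isOpen_lt continuous_const Complex.continuous_im) hinj hm
        (hasStrictDerivAt_logRatio hβ hm) (logRatioDeriv_ne_zero hβ hp hm)
    exact hg.fun_comp' w (Complex.differentiableAt_log (.inr hw.ne'))
  · exact Function.invFunOn_mem (hlog w hw)
  · beta_reduce
    rw [← hmw]
    exact hinj.leftInvOn_invFunOn hm

-- The inverse of `m ↦ m / V m` is known near `0` as the local inverse `φ`, and on the upper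
-- half-plane as the composition of `log` with the inverse of `logRatio β p`.
theorem exists_isSlitPick_leftInverse (hβ : ∀ k, 0 < β k) (hp : ∀ k, 0 < p k) (hk : 1 ≤ p k)
    (hmax : ∀ j, β j ≤ β k) :
    ∃ δ > 0, ∃ R, IsSlitPick δ R ∧ ∀ᶠ m : ℂ in 𝓝 0, ∀ x : ℝ,
      m * Complex.exp (-logVar β p m) = x → R x = m := by
  obtain ⟨φ, hφ, hφ', hright, hleft, hconj⟩ := exists_localInverse_mul_exp_neg_logVar β p
  obtain ⟨G, hGdiff, hGim, hG⟩ := exists_leftInverse_exp_logRatio hβ hp hk hmax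
  have hφ0 : φ 0 = 0 := by simpa using hleft.self_of_nhds
  have hφt : Tendsto φ (𝓝 0) (𝓝 0) := by simpa [hφ0] using hφ.continuousAt.tendsto
  have hGφ : ∀ᶠ w in 𝓝 0, 0 < w.im → G w = φ w := by
    filter_upwards [hright, eventually_im_pos_of_hasStrictDerivAt_one hφ' hconj,
      hφt.eventually (eventually_log_mul_exp_neg_logVar hβ hp)] with w hw hφim hlog hwim
    have hφw := hφim hwim
    exact hG w _ hφw (by rw [← hlog hφw, hw])
  obtain ⟨δ, hδ, R, hR, hRφ⟩ := exists_isSlitPick_of_upperHalfPlane hφ hconj hGdiff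
    (fun w hw => (hGim w hw).le) hGφ
  refine ⟨δ, hδ, R, hR, hleft.mono fun m hm x hx => ?_⟩
  rw [hRφ, ← hx, hm]

lemma ofReal_div_prod_rpow {m : ℝ} (hm : ∀ k, 0 < 1 + β k * m) :
    ((m / ∏ k, (1 + β k * m) ^ p k : ℝ) : ℂ) = m * Complex.exp (-logVar β p m) := by
  have hterm : ∀ k, (((1 + β k * m) ^ p k : ℝ) : ℂ) =
      Complex.exp (p k * Complex.log (1 + β k * m)) := by
    intro k
    rw [Real.rpow_def_of_pos (hm k), mul_comm, Complex.ofReal_exp, Complex.ofReal_mul,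
      Complex.ofReal_log (hm k).le, Complex.ofReal_add, Complex.ofReal_one, Complex.ofReal_mul]
  rw [Complex.ofReal_div, Complex.ofReal_prod, div_eq_mul_inv, Complex.exp_neg, logVar,
    Complex.exp_sum]
  simp only [hterm]

theorem prod_rpow_memVinf (hβ : ∀ k, 0 < β k) (hp : ∀ k, 0 < p k) (hk : 1 ≤ p k)
    (hmax : ∀ j, β j ≤ β k) : memVinf (fun m => ∏ j, (1 + β j * m) ^ p j) := by
  obtain ⟨δ, hδ, R, hR, hRinv⟩ := exists_isSlitPick_leftInverse hβ hp hk hmax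
  have hV : AnalyticAt ℝ (fun m : ℝ => ∏ j, (1 + β j * m) ^ p j) 0 :=
    Finset.analyticAt_fun_prod _ fun j _ =>
      Real.one_add_rpow_hasFPowerSeriesAt_zero.analyticAt.comp_of_eq (by fun_prop) (mul_zero _)
  refine memVinf_of_isSlitPick hδ hR hV (by simp) ?_
  have hpos : ∀ j, ∀ᶠ m : ℝ in 𝓝 0, 0 < 1 + β j * m := fun j =>
    ContinuousAt.eventually_lt (by fun_prop) (by fun_prop) (by simp)
  have hcast : Tendsto ((↑) : ℝ → ℂ) (𝓝 0) (𝓝 0) :=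
    Complex.continuous_ofReal.tendsto' 0 0 Complex.ofReal_zero
  filter_upwards [hcast.eventually hRinv, eventually_all.2 hpos] with m hm hmpos
  exact hm _ (ofReal_div_prod_rpow hmpos).symm

end RTransformOfProduct

theorem product_rpow_memVinf_general {ι : Type*} [Fintype ι] (β p : ι → ℝ) (hβ : ∀ j, 0 < β j)
    (hp : ∀ j, 0 < p j) (hmax : ∀ j, 1 < β j → (∀ i, β i ≤ β j) → 1 ≤ p j) :
    memVinf (fun m => (1 + m) * ∏ j, (1 + β j * m) ^ (p j)) := by
  let β' : Option ι → ℝ := fun k => k.elim 1 β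
  let p' : Option ι → ℝ := fun k => k.elim 1 p
  have hβ' : ∀ k, 0 < β' k := Option.forall.2 ⟨one_pos, hβ⟩
  have hp' : ∀ k, 0 < p' k := Option.forall.2 ⟨one_pos, hp⟩
  obtain ⟨k, hk, hkmax⟩ : ∃ k, 1 ≤ p' k ∧ ∀ j, β' j ≤ β' k := by
    by_cases hle : ∀ j, β j ≤ 1
    · exact ⟨none, le_rfl, Option.forall.2 ⟨le_rfl, hle⟩⟩
    · push Not at hle
      obtain ⟨i, hi⟩ := hle
      have : Nonempty ι := ⟨i⟩
      obtain ⟨j, hj⟩ := Finite.exists_max β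
      have hj1 := hi.trans_le (hj i)
      exact ⟨some j, hmax j hj1 hj, Option.forall.2 ⟨hj1.le, hj⟩⟩
  simpa [β', p', Fintype.prod_option] using prod_rpow_memVinf hβ' hp' hk hkmax

/-- If `βⱼ, pⱼ > 0` with `max{pⱼ, 1/βⱼ} ≥ 1` for each `j`, then
`V(m) = (1+m)·∏ⱼ (1+βⱼm)^{pⱼ}` is in `𝒱∞`. -/
theorem product_rpow_memVinf (d : ℕ) (hd : 1 ≤ d) (β p : Fin d → ℝ)
    (hβ : ∀ j, 0 < β j) (hp : ∀ j, 0 < p j)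
    (hmax : ∀ j, 1 ≤ max (p j) (β j)⁻¹) :
    memVinf (fun m => (1 + m) * ∏ j, (1 + β j * m) ^ (p j)) :=
  product_rpow_memVinf_general β p hβ hp fun j hj _ =>
    (le_max_iff.1 (hmax j)).resolve_right (inv_lt_one_of_one_lt₀ hj).not_ge
end
end
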